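/- Let A < B be real numbers, let α ∈ (0, 1/2) be a constant, and let φ : [A,B] → ℝ be Hölder continuous with exponent γ ∈ (0,1]. Define ψ(s) = cos²(πα) φ(s) − sin(πα) cos(πα) ((s−A)/(B−s))^α · H[ ((B−·)/(·−A))^α φ(·) ](s) for s ∈ (A,B). Then for every s ∈ (A,B) the principal value integrals involved exist and ψ(s) + tan(πα) H[ψ](s) = φ(s). -/

import Mathlib

open Filter Topology intervalIntegral

/-- The truncated approximants of the principal value integral `∫_A^B f(r)/(r−s) dr`. -/
noncomputable def pvApprox (A B : ℝ) (f : ℝ → ℝ) (s ε : ℝ) : ℝ :=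
  (∫ r in A..(s - ε), f r / (r - s)) + ∫ r in (s + ε)..B, f r / (r - s)

/-- The principal value integral `PV ∫_A^B f(r)/(r−s) dr` (junk value if the limit
does not exist). -/
noncomputable def pv (A B : ℝ) (f : ℝ → ℝ) (s : ℝ) : ℝ :=
  limUnder (𝓝[>] (0 : ℝ)) (pvApprox A B f s)

/-- The finite Hilbert transform `H[f](s) = (1/π) PV ∫_A^B f(r)/(r−s) dr`. -/
noncomputable def Hfin (A B : ℝ) (f : ℝ → ℝ) (s : ℝ) : ℝ :=
  (1 / Real.pi) * pv A B f s

/-!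
Write `w_α(r) = ((B−r)/(r−A))^α` and let `R(t) = ∫ w_α(r) (φ(r) − φ(t))/(r − t) dr`, which converges
absolutely because `φ` is Hölder. The principal value of `w_α` itself is explicit,
`PV ∫ w_α(r)/(r−s) dr = π cot(πα) w_α(s) − π/sin(πα)`: the substitution `(r−A)/(B−r) = x` turns it
into Mellin integrals over the half-line, evaluated by the beta integral and the Mittag-Leffler
series of the cotangent. Consequently `PV ∫ w_α φ/(r−s) dr` is this value times `φ(s)`, plus `R(s)`,
and the candidate is `ψ = cos(πα) w_{−α} v` with `v = φ − (sin(πα)/π) R`.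

Applying the same splitting to `w_{−α} v` leaves the double integral of
`w_{−α}(t) w_α(r) h[t, r]`, where `h(r) = φ[s, r]` and brackets are divided differences. It is
absolutely convergent, so no Poincaré–Bertrand formula is needed. Since
`w_{−α}(t) w_α(r) = 1 + w_{−α}(t) (w_α(r) − w_α(t))`, it is the sum of `∫∫ h[t, r]`, which the
antisymmetry of `1/(r − t)` (regularized as `x/(x² + e)`) turns into a logarithmic integral of `h`,
and of integrals of `h` against a kernel of constant sign whose integral in either variable is
explicit. The logarithms cancel, and the value obtained is exactly what turns
`∫ v[s, t] w_{−α}(t) dt` into `R(s)`.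
-/

open MeasureTheory Set
open scoped NNReal

section PrincipalValue

variable {A B s L : ℝ} {f g u v : ℝ → ℝ}

/-- The principal value `PV ∫_A^B f(r)/(r−s) dr` exists and equals `L`. -/
def HasPV (A B : ℝ) (f : ℝ → ℝ) (s L : ℝ) : Prop :=
  Tendsto (pvApprox A B f s) (𝓝[>] 0) (𝓝 L)

theorem HasPV.Hfin_eq (h : HasPV A B f s L) : Hfin A B f s = L / Real.pi := by
  rw [Hfin, pv, Tendsto.limUnder_eq h, one_div_mul_eq_div]

theorem eventually_truncation_mem_Ioo (hs : s ∈ Ioo A B) :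
    ∀ᶠ ε in 𝓝[>] (0 : ℝ), 0 < ε ∧ A < s - ε ∧ s + ε < B := by
  have hmem : Ioo 0 (min (s - A) (B - s)) ∈ 𝓝[>] (0 : ℝ) :=
    Ioo_mem_nhdsGT (lt_min (sub_pos.2 hs.1) (sub_pos.2 hs.2))
  filter_upwards [hmem] with ε hε
  have := lt_min_iff.1 hε.2
  exact ⟨hε.1, by linarith, by linarith⟩

theorem HasPV.congr (h : HasPV A B f s L) (hs : s ∈ Ioo A B) (hfg : EqOn f g (Ioo A B)) :
    HasPV A B g s L := by
  refine Tendsto.congr' ?_ h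
  filter_upwards [eventually_truncation_mem_Ioo hs] with ε ⟨hε, hA, hB⟩
  unfold pvApprox
  congr 1
  · refine integral_congr_Ioo_of_le hA.le fun r hr ↦ ?_
    simp only [hfg ⟨hr.1, by linarith [hr.2, hs.2]⟩]
  · refine integral_congr_Ioo_of_le hB.le fun r hr ↦ ?_
    simp only [hfg ⟨by linarith [hr.1, hs.1], hr.2⟩]

theorem HasPV.const_mul (c : ℝ) (h : HasPV A B f s L) :
    HasPV A B (fun r ↦ c * f r) s (c * L) := by
  refine (Tendsto.const_mul c h).congr fun ε ↦ ?_
  simp only [pvApprox, mul_div_assoc, intervalIntegral.integral_const_mul]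
  ring

theorem hasPV_one (hs : s ∈ Ioo A B) :
    HasPV A B (fun _ ↦ 1) s (Real.log ((B - s) / (s - A))) := by
  refine tendsto_const_nhds.congr' ?_
  filter_upwards [eventually_truncation_mem_Ioo hs] with ε ⟨hε, hA, _⟩
  have hleft : ∫ r in A..(s - ε), 1 / (r - s) = Real.log ε - Real.log (s - A) := by
    rw [intervalIntegral.integral_comp_sub_right (fun x ↦ 1 / x),
      integral_one_div_of_neg (by linarith [hs.1]) (by linarith),
      ← Real.log_div hε.ne' (sub_pos.2 hs.1).ne', ← neg_div_neg_eq]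
    ring_nf
  have hright : ∫ r in (s + ε)..B, 1 / (r - s) = Real.log (B - s) - Real.log ε := by
    rw [intervalIntegral.integral_comp_sub_right (fun x ↦ 1 / x),
      integral_one_div_of_pos (by linarith) (sub_pos.2 hs.2), add_sub_cancel_left,
      Real.log_div (sub_pos.2 hs.2).ne' hε.ne']
  rw [pvApprox, hleft, hright, Real.log_div (sub_pos.2 hs.2).ne' (sub_pos.2 hs.1).ne']
  ring

theorem intervalIntegrable_of_integrableOn_Ioo {a b : ℝ} (hf : IntegrableOn f (Ioo A B))
    (hA : A ≤ a) (hab : a ≤ b) (hB : b ≤ B) : IntervalIntegrable f volume a b :=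
  (intervalIntegrable_iff_integrableOn_Ioo_of_le hab).2 (hf.mono_set (Ioo_subset_Ioo hA hB))

theorem tendsto_truncated_integral (hs : s ∈ Ioo A B) (hf : IntegrableOn f (Ioo A B)) :
    Tendsto (fun ε ↦ (∫ r in A..(s - ε), f r) + ∫ r in (s + ε)..B, f r) (𝓝[>] 0)
      (𝓝 (∫ r in Ioo A B, f r)) := by
  have hAB : A ≤ B := (hs.1.trans hs.2).le
  have hint : IntegrableOn f (uIcc A B) := by
    rwa [uIcc_of_le hAB, integrableOn_Icc_iff_integrableOn_Ioo]
  have hnhds : uIcc A B ∈ 𝓝 s := by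
    rw [uIcc_of_le hAB]
    exact Icc_mem_nhds hs.1 hs.2
  have hleft : Tendsto (fun x ↦ ∫ r in A..x, f r) (𝓝 s) (𝓝 (∫ r in A..s, f r)) :=
    (intervalIntegral.continuousOn_primitive_interval hint).continuousAt hnhds
  have hright : Tendsto (fun x ↦ ∫ r in x..B, f r) (𝓝 s) (𝓝 (∫ r in s..B, f r)) :=
    (intervalIntegral.continuousOn_primitive_interval_left hint).continuousAt hnhds
  have hsub : Tendsto (fun ε ↦ s - ε) (𝓝[>] 0) (𝓝 s) :=
    ((by fun_prop : Continuous fun ε ↦ s - ε).tendsto' 0 s (sub_zero s)).mono_left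
      nhdsWithin_le_nhds
  have hadd : Tendsto (fun ε ↦ s + ε) (𝓝[>] 0) (𝓝 s) :=
    ((by fun_prop : Continuous fun ε ↦ s + ε).tendsto' 0 s (add_zero s)).mono_left
      nhdsWithin_le_nhds
  have hsum := (hleft.comp hsub).add (hright.comp hadd)
  rwa [integral_add_adjacent_intervals
    (intervalIntegrable_of_integrableOn_Ioo hf le_rfl hs.1.le hs.2.le)
    (intervalIntegrable_of_integrableOn_Ioo hf hs.1.le hs.2.le le_rfl),
    integral_of_le hAB, integral_Ioc_eq_integral_Ioo] at hsum

theorem intervalIntegrable_div_sub {a b : ℝ} (hu : IntegrableOn u (Ioo A B))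
    (hA : A ≤ a) (hab : a ≤ b) (hB : b ≤ B) (hs : s ∉ Icc a b) :
    IntervalIntegrable (fun r ↦ u r / (r - s)) volume a b := by
  simp only [div_eq_mul_inv]
  refine (intervalIntegrable_of_integrableOn_Ioo hu hA hab hB).mul_continuousOn ?_
  rw [uIcc_of_le hab]
  exact ContinuousOn.inv₀ (by fun_prop) fun r hr h ↦ hs (sub_eq_zero.1 h ▸ hr)

theorem HasPV.mul (hs : s ∈ Ioo A B) (hu : IntegrableOn u (Ioo A B)) (h : HasPV A B u s L)
    (hi : IntegrableOn (fun r ↦ slope v s r * u r) (Ioo A B)) :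
    HasPV A B (fun r ↦ v r * u r) s (v s * L + ∫ r in Ioo A B, slope v s r * u r) := by
  refine ((Tendsto.const_mul (v s) h).add (tendsto_truncated_integral hs hi)).congr' ?_
  filter_upwards [eventually_truncation_mem_Ioo hs] with ε ⟨hε, hA, hB⟩
  have hsplit (r : ℝ) : v r * u r / (r - s) = v s * (u r / (r - s)) + slope v s r * u r := by
    rw [slope_def_field]
    ring
  have hint (a b : ℝ) (ha : A ≤ a) (hab : a ≤ b) (hb : b ≤ B) (hsab : s ∉ Icc a b) :
      ∫ r in a..b, v r * u r / (r - s) =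
        v s * (∫ r in a..b, u r / (r - s)) + ∫ r in a..b, slope v s r * u r := by
    simp only [hsplit]
    rw [intervalIntegral.integral_add
      ((intervalIntegrable_div_sub hu ha hab hb hsab).const_mul _)
      (intervalIntegrable_of_integrableOn_Ioo hi ha hab hb), intervalIntegral.integral_const_mul]
  rw [pvApprox, pvApprox, hint A (s - ε) le_rfl hA.le (by linarith) (by simp [hε]),
    hint (s + ε) B (by linarith) hB.le le_rfl (by simp [hε])]
  ring

end PrincipalValue

section HalfLineMap

variable {A B x y : ℝ}

/-- The Möbius bijection of `(0, ∞)` onto `(A, B)` whose inverse is `r ↦ (r - A) / (B - r)`; it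
turns powers of `(B - r) / (r - A)` into powers of the coordinate. -/
noncomputable def halfLineMap (A B x : ℝ) : ℝ := (A + B * x) / (1 + x)

theorem halfLineMap_sub_left (hx : 0 < x) : halfLineMap A B x - A = (B - A) * x / (1 + x) := by
  rw [halfLineMap]
  field_simp
  ring

theorem right_sub_halfLineMap (hx : 0 < x) : B - halfLineMap A B x = (B - A) / (1 + x) := by
  rw [halfLineMap]
  field_simp
  ring

theorem halfLineMap_sub_halfLineMap (hx : 0 < x) (hy : 0 < y) :
    halfLineMap A B x - halfLineMap A B y = (B - A) * (x - y) / ((1 + x) * (1 + y)) := by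
  rw [halfLineMap, halfLineMap]
  field_simp
  ring

theorem halfLineMap_sub_div_sub {r : ℝ} (hr : r ∈ Ioo A B) :
    halfLineMap A B ((r - A) / (B - r)) = r := by
  have hB : B - r ≠ 0 := (sub_pos.2 hr.2).ne'
  have hAB : B - A ≠ 0 := (sub_pos.2 (hr.1.trans hr.2)).ne'
  have hden : 1 + (r - A) / (B - r) = (B - A) / (B - r) := by
    field_simp
    ring
  rw [halfLineMap, hden]
  field_simp
  ring

theorem image_halfLineMap (hAB : A < B) : halfLineMap A B '' Ioi 0 = Ioo A B := by
  have := sub_pos.2 hAB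
  apply Subset.antisymm
  · rintro _ ⟨x, hx : 0 < x, rfl⟩
    refine ⟨sub_pos.1 ?_, sub_pos.1 ?_⟩
    · rw [halfLineMap_sub_left hx]
      positivity
    · rw [right_sub_halfLineMap hx]
      positivity
  · exact fun r hr ↦ ⟨_, div_pos (sub_pos.2 hr.1) (sub_pos.2 hr.2), halfLineMap_sub_div_sub hr⟩

theorem injOn_halfLineMap (hAB : A < B) : InjOn (halfLineMap A B) (Ioi 0) := by
  intro x (hx : 0 < x) y (hy : 0 < y) hxy
  have hzero : (B - A) * (x - y) / ((1 + x) * (1 + y)) = 0 := by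
    rw [← halfLineMap_sub_halfLineMap hx hy, hxy, sub_self]
  have hBA : B - A ≠ 0 := (sub_pos.2 hAB).ne'
  have hx1 : 1 + x ≠ 0 := by positivity
  have hy1 : 1 + y ≠ 0 := by positivity
  simpa [hBA, hx1, hy1, sub_eq_zero] using hzero

theorem hasDerivAt_halfLineMap (hx : 0 < x) :
    HasDerivAt (halfLineMap A B) ((B - A) / (1 + x) ^ 2) x := by
  have hnum : HasDerivAt (fun x ↦ A + B * x) B x := by
    simpa using ((hasDerivAt_id x).const_mul B).const_add A
  have hden : HasDerivAt (fun x : ℝ ↦ 1 + x) 1 x := (hasDerivAt_id x).const_add 1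
  exact (hnum.div hden (by positivity)).congr_deriv (by ring)

theorem abs_deriv_halfLineMap_smul (hAB : A < B) (f : ℝ → ℝ) (x : ℝ) :
    |(B - A) / (1 + x) ^ 2| • f (halfLineMap A B x) =
      (B - A) / (1 + x) ^ 2 * f (halfLineMap A B x) := by
  have := sub_pos.2 hAB
  rw [abs_of_nonneg (by positivity), smul_eq_mul]

theorem integral_Ioo_eq_integral_halfLine (hAB : A < B) (f : ℝ → ℝ) :
    ∫ r in Ioo A B, f r =
      ∫ x in Ioi 0, (B - A) / (1 + x) ^ 2 * f (halfLineMap A B x) := by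
  simp only [← image_halfLineMap hAB, integral_image_eq_integral_abs_deriv_smul measurableSet_Ioi
    (fun _ hx ↦ (hasDerivAt_halfLineMap hx).hasDerivWithinAt) (injOn_halfLineMap hAB),
    abs_deriv_halfLineMap_smul hAB]

theorem integrableOn_Ioo_iff_halfLine (hAB : A < B) (f : ℝ → ℝ) :
    IntegrableOn f (Ioo A B) ↔
      IntegrableOn (fun x ↦ (B - A) / (1 + x) ^ 2 * f (halfLineMap A B x)) (Ioi 0) := by
  simp only [← image_halfLineMap hAB,
    integrableOn_image_iff_integrableOn_abs_deriv_smul measurableSet_Ioi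
    (fun _ hx ↦ (hasDerivAt_halfLineMap hx).hasDerivWithinAt) (injOn_halfLineMap hAB),
    abs_deriv_halfLineMap_smul hAB]

theorem integrableOn_one_div_one_add_sq : IntegrableOn (fun x : ℝ ↦ 1 / (1 + x) ^ 2) (Ioi 0) := by
  have h : IntegrableOn (fun _ ↦ (1 : ℝ)) (Ioo (0 : ℝ) 1) := by simp
  simpa [integrableOn_Ioo_iff_halfLine zero_lt_one] using h

end HalfLineMap

section HalfLineIntegrals

variable {α x y z : ℝ} {f g : ℝ → ℝ}

theorem integrableOn_of_abs_le {S : Set ℝ} (hS : MeasurableSet S)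
    (hf : AEStronglyMeasurable f (volume.restrict S)) (hg : IntegrableOn g S)
    (h : ∀ x ∈ S, |f x| ≤ g x) : IntegrableOn f S :=
  Integrable.mono' hg hf (ae_restrict_of_forall_mem hS h)

theorem ofReal_rpow_mul_one_sub_rpow (hx : x ∈ Ioo (0 : ℝ) 1) :
    ((x ^ (-α) * (1 - x) ^ (α - 1) : ℝ) : ℂ) =
      (x : ℂ) ^ (((1 - α : ℝ) : ℂ) - 1) * (1 - (x : ℂ)) ^ ((α : ℂ) - 1) := by
  rw [Complex.ofReal_mul, Complex.ofReal_cpow hx.1.le, Complex.ofReal_cpow (sub_pos.2 hx.2).le]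
  push_cast
  ring_nf

theorem integrableOn_rpow_mul_one_sub_rpow (hα : α ∈ Ioo (0 : ℝ) 1) :
    IntegrableOn (fun x : ℝ ↦ x ^ (-α) * (1 - x) ^ (α - 1)) (Ioo 0 1) := by
  have hconv := Complex.betaIntegral_convergent (u := ((1 - α : ℝ) : ℂ)) (v := (α : ℂ))
    (by simpa using hα.2) (by simpa using hα.1)
  rw [intervalIntegrable_iff_integrableOn_Ioo_of_le zero_le_one,
    ← integrableOn_congr_fun (fun x hx ↦ ofReal_rpow_mul_one_sub_rpow hx) measurableSet_Ioo]
    at hconv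
  exact hconv.re

theorem integral_rpow_mul_one_sub_rpow (hα : α ∈ Ioo (0 : ℝ) 1) :
    ∫ x in Ioo (0 : ℝ) 1, x ^ (-α) * (1 - x) ^ (α - 1) = Real.pi / Real.sin (Real.pi * α) := by
  have hbeta : Complex.betaIntegral ((1 - α : ℝ) : ℂ) α =
      ((∫ x in Ioo (0 : ℝ) 1, x ^ (-α) * (1 - x) ^ (α - 1) : ℝ) : ℂ) := by
    rw [Complex.betaIntegral, intervalIntegral.integral_of_le zero_le_one,
      integral_Ioc_eq_integral_Ioo, ← integral_complex_ofReal]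
    exact setIntegral_congr_fun measurableSet_Ioo fun x hx ↦
      (ofReal_rpow_mul_one_sub_rpow hx).symm
  have hgamma := ProbabilityTheory.beta_eq_betaIntegralReal (1 - α) α (sub_pos.2 hα.2) hα.1
  rw [hbeta, Complex.ofReal_re] at hgamma
  rw [← hgamma, ProbabilityTheory.beta, sub_add_cancel, Real.Gamma_one, div_one, mul_comm,
    Real.Gamma_mul_Gamma_one_sub]

theorem halfLineMap_zero_one_beta (hx : 0 < x) :
    (1 - 0) / (1 + x) ^ 2 * (halfLineMap 0 1 x ^ (-α) * (1 - halfLineMap 0 1 x) ^ (α - 1)) =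
      x ^ (-α) / (1 + x) := by
  have h1x : 0 < 1 + x := by positivity
  rw [right_sub_halfLineMap hx, halfLineMap, zero_add, one_mul, sub_zero,
    Real.div_rpow hx.le h1x.le, Real.div_rpow zero_le_one h1x.le, Real.one_rpow,
    Real.rpow_neg h1x.le α, Real.rpow_sub h1x, Real.rpow_one]
  field_simp

theorem integrableOn_rpow_div_one_add (hα : α ∈ Ioo (0 : ℝ) 1) :
    IntegrableOn (fun x : ℝ ↦ x ^ (-α) / (1 + x)) (Ioi 0) :=
  (integrableOn_congr_fun (fun _ hx ↦ halfLineMap_zero_one_beta hx) measurableSet_Ioi).1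
    ((integrableOn_Ioo_iff_halfLine zero_lt_one _).1 (integrableOn_rpow_mul_one_sub_rpow hα))

theorem integral_rpow_div_one_add (hα : α ∈ Ioo (0 : ℝ) 1) :
    ∫ x in Ioi (0 : ℝ), x ^ (-α) / (1 + x) = Real.pi / Real.sin (Real.pi * α) := by
  rw [← integral_rpow_mul_one_sub_rpow hα, integral_Ioo_eq_integral_halfLine zero_lt_one]
  exact setIntegral_congr_fun measurableSet_Ioi fun x hx ↦ (halfLineMap_zero_one_beta hx).symm

theorem rpow_div_one_add_mul_eq (hy : 0 < y) (hz : 0 < z) :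
    z ^ (-α) / (1 + y * z) = y ^ α * ((y * z) ^ (-α) / (1 + y * z)) := by
  have := Real.rpow_pos_of_pos hy α
  rw [Real.mul_rpow hy.le hz.le, Real.rpow_neg hy.le]
  field_simp

theorem integrableOn_rpow_div_one_add_mul (hα : α ∈ Ioo (0 : ℝ) 1) (hy : 0 < y) :
    IntegrableOn (fun z : ℝ ↦ z ^ (-α) / (1 + y * z)) (Ioi 0) := by
  have heq : EqOn (fun z ↦ z ^ (-α) / (1 + y * z))
      (fun z ↦ y ^ α * ((y * z) ^ (-α) / (1 + y * z))) (Ioi 0) :=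
    fun z hz ↦ rpow_div_one_add_mul_eq hy hz
  rw [integrableOn_congr_fun heq measurableSet_Ioi]
  refine Integrable.const_mul ((integrableOn_Ioi_comp_mul_left_iff
    (fun x ↦ x ^ (-α) / (1 + x)) 0 hy).2 ?_) _
  rw [mul_zero]
  exact integrableOn_rpow_div_one_add hα

theorem integral_rpow_div_one_add_mul (hα : α ∈ Ioo (0 : ℝ) 1) (hy : 0 < y) :
    ∫ z in Ioi (0 : ℝ), z ^ (-α) / (1 + y * z) =
      y ^ (α - 1) * (Real.pi / Real.sin (Real.pi * α)) := by
  rw [setIntegral_congr_fun measurableSet_Ioi fun z hz ↦ rpow_div_one_add_mul_eq hy hz,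
    MeasureTheory.integral_const_mul, integral_comp_mul_left_Ioi (fun x ↦ x ^ (-α) / (1 + x)) 0 hy,
    mul_zero, integral_rpow_div_one_add hα, smul_eq_mul, ← mul_assoc, Real.rpow_sub_one hy.ne',
    div_eq_mul_inv (y ^ α)]

theorem image_inv_Ioo_zero_one : Inv.inv '' Ioo (0 : ℝ) 1 = Ioi 1 := by
  rw [image_inv_eq_inv, inv_Ioo_0_left one_pos, inv_one]

theorem integral_Ioi_one_eq_integral_inv (g : ℝ → ℝ) :
    ∫ z in Ioi (1 : ℝ), g z = ∫ z in Ioo (0 : ℝ) 1, g z⁻¹ / z ^ 2 := by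
  rw [← image_inv_Ioo_zero_one, integral_image_eq_integral_abs_deriv_smul measurableSet_Ioo
    (fun z hz ↦ (hasDerivAt_inv hz.1.ne').hasDerivWithinAt) inv_injective.injOn]
  simp only [abs_neg, abs_inv, abs_sq, smul_eq_mul, inv_mul_eq_div]

theorem integrableOn_Ioi_one_iff_inv (g : ℝ → ℝ) :
    IntegrableOn g (Ioi 1) ↔ IntegrableOn (fun z ↦ g z⁻¹ / z ^ 2) (Ioo 0 1) := by
  rw [← image_inv_Ioo_zero_one, integrableOn_image_iff_integrableOn_abs_deriv_smul
    measurableSet_Ioo (fun z hz ↦ (hasDerivAt_inv hz.1.ne').hasDerivWithinAt) inv_injective.injOn]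
  simp only [abs_neg, abs_inv, abs_sq, smul_eq_mul, inv_mul_eq_div]

theorem integrableOn_Ioo_rpow {p : ℝ} (hp : -1 < p) :
    IntegrableOn (fun x : ℝ ↦ x ^ p) (Ioo 0 1) :=
  (integrableOn_Ioo_rpow_iff one_pos).2 hp

theorem integral_Ioo_rpow {p : ℝ} (hp : -1 < p) : ∫ x in Ioo (0 : ℝ) 1, x ^ p = 1 / (p + 1) := by
  rw [← integral_Ioc_eq_integral_Ioo, ← intervalIntegral.integral_of_le zero_le_one,
    integral_rpow (Or.inl hp), Real.one_rpow, Real.zero_rpow (by linarith), sub_zero]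

theorem hasSum_cotTerm_real (hα : α ∈ Ioo (0 : ℝ) 1) :
    HasSum (fun n : ℕ ↦ 1 / (n - α + 1) - 1 / (n + α + 1))
      (1 / α - Real.pi * Real.cot (Real.pi * α)) := by
  have hint : (α : ℂ) ∈ Complex.integerComplement := by
    rintro ⟨n, hn⟩
    have hn' : (n : ℝ) = α := by exact_mod_cast hn
    have hpos : (0 : ℝ) < n := hn' ▸ hα.1
    have hlt : (n : ℝ) < 1 := hn' ▸ hα.2
    norm_cast at hpos hlt
    omega
  have hsum := (summable_cotTerm hint).hasSum
  rw [show ∑' n, cotTerm (α : ℂ) n = _ from (cot_series_rep' hint).symm] at hsum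
  rw [← Complex.hasSum_ofReal]
  have hterm (n : ℕ) : ((1 / (n - α + 1) - 1 / (n + α + 1) : ℝ) : ℂ) = -cotTerm α n := by
    rw [cotTerm, ← neg_sub ((n : ℂ) + 1) α, div_neg]
    push_cast
    ring
  have hlim : ((1 / α - Real.pi * Real.cot (Real.pi * α) : ℝ) : ℂ) =
      -(Real.pi * Complex.cot (Real.pi * α) - 1 / α) := by
    push_cast
    ring
  simpa only [hterm, hlim] using hsum.neg

end HalfLineIntegrals

section CotangentIntegral

variable {α y z : ℝ}

theorem one_sub_rpow_div_one_sub_mem_Icc (hα : α ∈ Ioo (0 : ℝ) 1) (hz : z ∈ Ioo (0 : ℝ) 1) :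
    (1 - z ^ α) / (1 - z) ∈ Icc (0 : ℝ) 1 := by
  have hz1 : 0 < 1 - z := sub_pos.2 hz.2
  have hle : z ^ α ≤ 1 := Real.rpow_le_one hz.1.le hz.2.le hα.1.le
  have hge := Real.rpow_le_rpow_of_exponent_ge hz.1 hz.2.le hα.2.le
  rw [Real.rpow_one] at hge
  exact ⟨div_nonneg (sub_nonneg.2 hle) hz1.le, (div_le_one hz1).2 (by linarith)⟩

theorem one_sub_rpow_neg_div_one_sub (hz : 0 < z) :
    (1 - z ^ (-α)) / (1 - z) = -(z ^ (-α) * ((1 - z ^ α) / (1 - z))) := by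
  rw [← mul_div_assoc, mul_sub, mul_one, ← Real.rpow_add hz, neg_add_cancel, Real.rpow_zero,
    ← neg_div, neg_sub]

theorem integrableOn_one_sub_rpow_div_one_sub (hα : α ∈ Ioo (0 : ℝ) 1) :
    IntegrableOn (fun z : ℝ ↦ (1 - z ^ α) / (1 - z)) (Ioo 0 1) := by
  refine integrableOn_of_abs_le (g := fun _ ↦ 1) measurableSet_Ioo
    (by fun_prop : Measurable _).aestronglyMeasurable (by simp) fun z hz ↦ ?_
  have hmem := one_sub_rpow_div_one_sub_mem_Icc hα hz
  rw [abs_of_nonneg hmem.1]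
  exact hmem.2

theorem integrableOn_one_sub_rpow_neg_div_one_sub (hα : α ∈ Ioo (0 : ℝ) 1) :
    IntegrableOn (fun z : ℝ ↦ (1 - z ^ (-α)) / (1 - z)) (Ioo 0 1) := by
  refine integrableOn_of_abs_le measurableSet_Ioo
    (by fun_prop : Measurable _).aestronglyMeasurable
    (integrableOn_Ioo_rpow (neg_lt_neg hα.2)) fun z hz ↦ ?_
  have hmem := one_sub_rpow_div_one_sub_mem_Icc hα hz
  have hzα : 0 < z ^ (-α) := Real.rpow_pos_of_pos hz.1 _
  rw [one_sub_rpow_neg_div_one_sub hz.1, abs_neg, abs_of_nonneg (mul_nonneg hzα.le hmem.1)]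
  exact mul_le_of_le_one_right hzα.le hmem.2

theorem hasSum_rpow_sub_rpow (hz : z ∈ Ioo (0 : ℝ) 1) :
    HasSum (fun n : ℕ ↦ z ^ (n - α) - z ^ (n + α)) ((z ^ (-α) - z ^ α) / (1 - z)) := by
  have hterm (n : ℕ) : z ^ (n - α) - z ^ (n + α) = (z ^ (-α) - z ^ α) * z ^ n := by
    rw [sub_eq_add_neg (n : ℝ), Real.rpow_add hz.1, Real.rpow_add hz.1, Real.rpow_natCast]
    ring
  simp only [hterm, div_eq_mul_inv]
  exact (hasSum_geometric_of_lt_one hz.1.le hz.2).mul_left _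

theorem integral_rpow_neg_sub_rpow_div_one_sub (hα : α ∈ Ioo (0 : ℝ) 1) :
    ∫ z in Ioo (0 : ℝ) 1, (z ^ (-α) - z ^ α) / (1 - z) =
      1 / α - Real.pi * Real.cot (Real.pi * α) := by
  have hexp (n : ℕ) : -1 < n - α ∧ -1 < n + α := by
    have := n.cast_nonneg (α := ℝ)
    exact ⟨by linarith [hα.2], by linarith [hα.1]⟩
  have hint (n : ℕ) : IntegrableOn (fun z : ℝ ↦ z ^ (n - α) - z ^ (n + α)) (Ioo 0 1) :=
    (integrableOn_Ioo_rpow (hexp n).1).sub (integrableOn_Ioo_rpow (hexp n).2)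
  have hval (n : ℕ) : ∫ z in Ioo (0 : ℝ) 1, z ^ (n - α) - z ^ (n + α) =
      1 / (n - α + 1) - 1 / (n + α + 1) := by
    rw [MeasureTheory.integral_sub (integrableOn_Ioo_rpow (hexp n).1)
      (integrableOn_Ioo_rpow (hexp n).2), integral_Ioo_rpow (hexp n).1,
      integral_Ioo_rpow (hexp n).2]
  have hnorm (n : ℕ) : ∫ z in Ioo (0 : ℝ) 1, ‖z ^ (n - α) - z ^ (n + α)‖ =
      1 / (n - α + 1) - 1 / (n + α + 1) := by
    rw [← hval n]
    refine setIntegral_congr_fun measurableSet_Ioo fun z hz ↦ Real.norm_of_nonneg ?_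
    exact sub_nonneg.2 (Real.rpow_le_rpow_of_exponent_ge hz.1 hz.2.le (by linarith [hα.1]))
  have hsum := hasSum_integral_of_summable_integral_norm hint
    (by simpa only [hnorm] using (hasSum_cotTerm_real hα).summable)
  simp only [hval] at hsum
  rw [← hsum.unique (hasSum_cotTerm_real hα)]
  exact setIntegral_congr_fun measurableSet_Ioo fun z hz ↦ (hasSum_rpow_sub_rpow hz).tsum_eq.symm

/-- The kernel `(z^(-α) - 1) / (z - 1)` made integrable at infinity; its integral over `(0, ∞)` is
`π cot (πα)`. -/
noncomputable def cotKernel (α z : ℝ) : ℝ := slope (fun x : ℝ ↦ x ^ (-α)) 1 z + 1 / (1 + z)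

theorem cotKernel_add_cotKernel_inv (hz : z ∈ Ioo (0 : ℝ) 1) :
    cotKernel α z + cotKernel α z⁻¹ / z ^ 2 =
      z ^ (α - 1) - (z ^ (-α) - z ^ α) / (1 - z) := by
  have hz0 := hz.1
  have hz1 : 1 - z ≠ 0 := (sub_pos.2 hz.2).ne'
  have hinv : z⁻¹ - 1 = (1 - z) / z := by field_simp
  have := Real.rpow_pos_of_pos hz0 α
  rw [cotKernel, cotKernel, slope_def_field, slope_def_field, hinv, ← neg_sub 1 z,
    Real.inv_rpow hz0.le, Real.rpow_neg hz0.le, inv_inv, Real.one_rpow,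
    Real.rpow_sub_one hz0.ne']
  field_simp
  ring

theorem integrableOn_cotKernel_Ioo (hα : α ∈ Ioo (0 : ℝ) 1) :
    IntegrableOn (cotKernel α) (Ioo 0 1) := by
  have hslope (z : ℝ) : cotKernel α z = (1 - z ^ (-α)) / (1 - z) + 1 / (1 + z) := by
    rw [cotKernel, slope_comm, slope_def_field, Real.one_rpow]
  have hinv : IntegrableOn (fun z : ℝ ↦ 1 / (1 + z)) (Ioo 0 1) := by
    refine (ContinuousOn.integrableOn_Icc ?_).mono_set Ioo_subset_Icc_self
    exact continuousOn_const.div (by fun_prop) fun z hz ↦ by linarith [hz.1]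
  exact ((integrableOn_one_sub_rpow_neg_div_one_sub hα).add hinv).congr_fun
    (fun z _ ↦ (hslope z).symm) measurableSet_Ioo

theorem integrableOn_rpow_neg_sub_rpow_div_one_sub (hα : α ∈ Ioo (0 : ℝ) 1) :
    IntegrableOn (fun z : ℝ ↦ (z ^ (-α) - z ^ α) / (1 - z)) (Ioo 0 1) := by
  refine ((integrableOn_one_sub_rpow_div_one_sub hα).sub
    (integrableOn_one_sub_rpow_neg_div_one_sub hα)).congr_fun (fun z _ ↦ ?_) measurableSet_Ioo
  simp only [Pi.sub_apply]
  ring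

theorem integrableOn_cotKernel_inv (hα : α ∈ Ioo (0 : ℝ) 1) :
    IntegrableOn (fun z ↦ cotKernel α z⁻¹ / z ^ 2) (Ioo 0 1) := by
  have hfold := (integrableOn_Ioo_rpow (by linarith [hα.1] : -1 < α - 1)).sub
    (integrableOn_rpow_neg_sub_rpow_div_one_sub hα)
  refine (hfold.sub (integrableOn_cotKernel_Ioo hα)).congr_fun (fun z hz ↦ ?_) measurableSet_Ioo
  simp only [Pi.sub_apply, ← cotKernel_add_cotKernel_inv hz, add_sub_cancel_left]

theorem integrableOn_cotKernel (hα : α ∈ Ioo (0 : ℝ) 1) :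
    IntegrableOn (cotKernel α) (Ioi 0) := by
  rw [← Ioc_union_Ioi_eq_Ioi zero_le_one, integrableOn_union,
    integrableOn_Ioc_iff_integrableOn_Ioo, integrableOn_Ioi_one_iff_inv]
  exact ⟨integrableOn_cotKernel_Ioo hα, integrableOn_cotKernel_inv hα⟩

theorem integral_cotKernel (hα : α ∈ Ioo (0 : ℝ) 1) :
    ∫ z in Ioi 0, cotKernel α z = Real.pi * Real.cot (Real.pi * α) := by
  have hint := integrableOn_cotKernel hα
  have hexp : -1 < α - 1 := by linarith [hα.1]
  rw [← Ioc_union_Ioi_eq_Ioi zero_le_one] at hint ⊢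
  rw [setIntegral_union (Ioc_disjoint_Ioi le_rfl) measurableSet_Ioi hint.left_of_union
    hint.right_of_union, integral_Ioc_eq_integral_Ioo, integral_Ioi_one_eq_integral_inv,
    ← integral_add (integrableOn_cotKernel_Ioo hα) (integrableOn_cotKernel_inv hα),
    setIntegral_congr_fun measurableSet_Ioo fun z hz ↦ cotKernel_add_cotKernel_inv hz,
    MeasureTheory.integral_sub (integrableOn_Ioo_rpow hexp)
      (integrableOn_rpow_neg_sub_rpow_div_one_sub hα), integral_Ioo_rpow hexp,
    integral_rpow_neg_sub_rpow_div_one_sub hα]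
  ring

theorem integrableOn_div_sub_one_div_one_add (hy : 0 < y) :
    IntegrableOn (fun z : ℝ ↦ y / (1 + y * z) - 1 / (1 + z)) (Ioi 0) := by
  refine integrableOn_of_abs_le measurableSet_Ioi
    (by fun_prop : Measurable _).aestronglyMeasurable
    (integrableOn_one_div_one_add_sq.const_mul (|y - 1| * (1 + 1 / y))) fun z (hz : 0 < z) ↦ ?_
  have hsub : y / (1 + y * z) - 1 / (1 + z) = (y - 1) * (1 / ((1 + y * z) * (1 + z))) := by
    field_simp
    ring
  rw [hsub, abs_mul, abs_of_pos (by positivity : 0 < 1 / ((1 + y * z) * (1 + z))), mul_assoc]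
  refine mul_le_mul_of_nonneg_left ?_ (abs_nonneg _)
  rw [mul_one_div, div_le_div_iff₀ (by positivity) (by positivity)]
  have hle : 1 + z ≤ (1 + 1 / y) * (1 + y * z) := by
    have : (1 + 1 / y) * (1 + y * z) = 1 + z + 1 / y + y * z := by
      field_simp
      ring
    have := mul_pos hy hz
    have := one_div_pos.2 hy
    linarith
  calc 1 * (1 + z) ^ 2 = (1 + z) * (1 + z) := by ring
    _ ≤ (1 + 1 / y) * (1 + y * z) * (1 + z) := by gcongr
    _ = (1 + 1 / y) * ((1 + y * z) * (1 + z)) := by ring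

theorem integral_div_sub_one_div_one_add (hy : 0 < y) :
    ∫ z in Ioi (0 : ℝ), (y / (1 + y * z) - 1 / (1 + z)) = Real.log y := by
  have hderiv (z : ℝ) (hz : z ∈ Ici 0) :
      HasDerivAt (fun z ↦ Real.log (1 + y * z) - Real.log (1 + z))
        (y / (1 + y * z) - 1 / (1 + z)) z := by
    have hz0 : 0 ≤ z := hz
    have hlin : HasDerivAt (fun z ↦ 1 + y * z) y z := by
      simpa using ((hasDerivAt_id z).const_mul y).const_add 1
    exact (hlin.log (by positivity)).sub (((hasDerivAt_id z).const_add 1).log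
      (by simp only [id]; positivity))
  have hlim : Tendsto (fun z ↦ y + (1 - y) / (1 + z)) atTop (𝓝 y) := by
    simpa using tendsto_const_nhds.add (tendsto_const_nhds.div_atTop
      (tendsto_atTop_add_const_left atTop (1 : ℝ) tendsto_id))
  have hloglim : Tendsto (fun z ↦ Real.log (1 + y * z) - Real.log (1 + z)) atTop
      (𝓝 (Real.log y)) := by
    refine ((Real.continuousAt_log hy.ne').tendsto.comp hlim).congr' ?_
    filter_upwards [eventually_ge_atTop 0] with z hz
    rw [← Real.log_div (by positivity) (by positivity), Function.comp_apply]
    congr 1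
    field_simp
    ring
  simpa using integral_Ioi_of_hasDerivAt_of_tendsto' hderiv
    (integrableOn_div_sub_one_div_one_add hy) hloglim

theorem slope_rpow_mul_eq_cotKernel (hy : 0 < y) (hz : 0 < z) :
    slope (fun x : ℝ ↦ x ^ (-α)) 1 z * ((1 + y) / (1 + y * z)) =
      cotKernel α z + (y / (1 + y * z) - 1 / (1 + z)) - y * (z ^ (-α) / (1 + y * z)) := by
  rcases eq_or_ne z 1 with rfl | hz1
  · simp only [cotKernel, slope_same, mul_one, Real.one_rpow]
    ring
  · have := sub_ne_zero.2 hz1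
    rw [cotKernel, slope_def_field, Real.one_rpow]
    field_simp
    ring

theorem integrableOn_slope_rpow_mul (hα : α ∈ Ioo (0 : ℝ) 1) (hy : 0 < y) :
    IntegrableOn (fun z ↦ slope (fun x : ℝ ↦ x ^ (-α)) 1 z * ((1 + y) / (1 + y * z))) (Ioi 0) :=
  (((integrableOn_cotKernel hα).add (integrableOn_div_sub_one_div_one_add hy)).sub
    ((integrableOn_rpow_div_one_add_mul hα hy).const_mul y)).congr_fun
    (fun _ hz ↦ (slope_rpow_mul_eq_cotKernel hy hz).symm) measurableSet_Ioi

theorem integral_slope_rpow_mul (hα : α ∈ Ioo (0 : ℝ) 1) (hy : 0 < y) :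
    ∫ z in Ioi (0 : ℝ), slope (fun x : ℝ ↦ x ^ (-α)) 1 z * ((1 + y) / (1 + y * z)) =
      Real.pi * Real.cot (Real.pi * α) + Real.log y -
        y ^ α * (Real.pi / Real.sin (Real.pi * α)) := by
  have hcot := integrableOn_cotKernel hα
  have hlog := integrableOn_div_sub_one_div_one_add hy
  have hadd : IntegrableOn (fun z ↦ cotKernel α z + (y / (1 + y * z) - 1 / (1 + z))) (Ioi 0) :=
    hcot.add hlog
  rw [setIntegral_congr_fun measurableSet_Ioi fun z hz ↦ slope_rpow_mul_eq_cotKernel hy hz,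
    MeasureTheory.integral_sub hadd
      ((integrableOn_rpow_div_one_add_mul hα hy).const_mul y),
    MeasureTheory.integral_add hcot hlog, MeasureTheory.integral_const_mul,
    integral_cotKernel hα, integral_div_sub_one_div_one_add hy,
    integral_rpow_div_one_add_mul hα hy, Real.rpow_sub_one hy.ne']
  field_simp

end CotangentIntegral

section JacobiWeight

variable {A B α r s t x y : ℝ}

/-- The endpoint weight `((B - r) / (r - A))^α`; on `(A, B)` its inverse is the weight with
exponent `-α`. -/
noncomputable def jacobiWeight (A B α r : ℝ) : ℝ := ((B - r) / (r - A)) ^ α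

theorem jacobiWeight_pos (hr : r ∈ Ioo A B) : 0 < jacobiWeight A B α r :=
  Real.rpow_pos_of_pos (div_pos (sub_pos.2 hr.2) (sub_pos.2 hr.1)) α

theorem jacobiWeight_neg (hr : r ∈ Ioo A B) :
    jacobiWeight A B (-α) r = (jacobiWeight A B α r)⁻¹ :=
  Real.rpow_neg (div_pos (sub_pos.2 hr.2) (sub_pos.2 hr.1)).le α

theorem jacobiWeight_neg_mul (hr : r ∈ Ioo A B) :
    jacobiWeight A B (-α) r * jacobiWeight A B α r = 1 := by
  rw [jacobiWeight_neg hr, inv_mul_cancel₀ (jacobiWeight_pos hr).ne']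

theorem jacobiWeight_neg_eq_rpow (A B α r : ℝ) :
    jacobiWeight A B (-α) r = ((r - A) / (B - r)) ^ α := by
  rw [jacobiWeight, Real.rpow_neg_eq_inv_rpow, inv_div]

theorem add_sub_mem_Ioo (hr : r ∈ Ioo A B) : A + B - r ∈ Ioo A B :=
  ⟨by linarith [hr.2], by linarith [hr.1]⟩

theorem jacobiWeight_neg_reflect (r : ℝ) :
    jacobiWeight A B (-α) (A + B - r) = jacobiWeight A B α r := by
  rw [jacobiWeight, Real.rpow_neg_eq_inv_rpow, inv_div, jacobiWeight]
  ring_nf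

theorem slope_jacobiWeight_neg_reflect (t r : ℝ) :
    slope (jacobiWeight A B (-α)) (A + B - t) (A + B - r) = -slope (jacobiWeight A B α) t r := by
  rw [slope_def_field, slope_def_field, jacobiWeight_neg_reflect, jacobiWeight_neg_reflect,
    ← div_neg]
  ring_nf

theorem jacobiWeight_halfLineMap (hAB : A < B) (hx : 0 < x) :
    jacobiWeight A B α (halfLineMap A B x) = x ^ (-α) := by
  have := sub_pos.2 hAB
  rw [jacobiWeight, right_sub_halfLineMap hx, halfLineMap_sub_left hx, Real.rpow_neg_eq_inv_rpow]
  field_simp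

theorem slope_jacobiWeight_halfLineMap (hAB : A < B) (hy : 0 < y) (hz : 0 < z) :
    (B - A) / (1 + y * z) ^ 2 *
        slope (jacobiWeight A B α) (halfLineMap A B y) (halfLineMap A B (y * z)) =
      y⁻¹ * y ^ (-α) * (slope (fun x : ℝ ↦ x ^ (-α)) 1 z * ((1 + y) / (1 + y * z))) := by
  rcases eq_or_ne z 1 with rfl | hz1
  · simp only [mul_one, slope_same, mul_zero, zero_mul]
  · have := sub_ne_zero.2 hz1
    have := sub_pos.2 hAB
    have hyz := mul_pos hy hz
    rw [slope_def_field, slope_def_field, jacobiWeight_halfLineMap hAB hyz,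
      jacobiWeight_halfLineMap hAB hy, halfLineMap_sub_halfLineMap hyz hy,
      Real.mul_rpow hy.le hz.le, Real.one_rpow, ← mul_sub_one y z]
    field_simp

theorem integrableOn_slope_jacobiWeight_halfLineMap (hAB : A < B) (hα : α ∈ Ioo (0 : ℝ) 1)
    (hy : 0 < y) :
    IntegrableOn (slope (jacobiWeight A B α) (halfLineMap A B y)) (Ioo A B) := by
  rw [integrableOn_Ioo_iff_halfLine hAB, ← mul_zero y, ← integrableOn_Ioi_comp_mul_left_iff _ _ hy]
  exact IntegrableOn.congr_fun ((integrableOn_slope_rpow_mul hα hy).const_mul _)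
    (fun z hz ↦ (slope_jacobiWeight_halfLineMap hAB hy hz).symm) measurableSet_Ioi

theorem integral_slope_jacobiWeight_halfLineMap (hAB : A < B) (hα : α ∈ Ioo (0 : ℝ) 1)
    (hy : 0 < y) :
    ∫ r in Ioo A B, slope (jacobiWeight A B α) (halfLineMap A B y) r =
      y ^ (-α) * (Real.pi * Real.cot (Real.pi * α) + Real.log y) -
        Real.pi / Real.sin (Real.pi * α) := by
  have hscale := integral_comp_mul_left_Ioi (fun x ↦ (B - A) / (1 + x) ^ 2 *
    slope (jacobiWeight A B α) (halfLineMap A B y) (halfLineMap A B x)) 0 hy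
  rw [mul_zero, setIntegral_congr_fun measurableSet_Ioi
    fun z hz ↦ slope_jacobiWeight_halfLineMap hAB hy hz, MeasureTheory.integral_const_mul,
    integral_slope_rpow_mul hα hy, ← integral_Ioo_eq_integral_halfLine hAB, smul_eq_mul] at hscale
  have := Real.rpow_pos_of_pos hy α
  rw [← mul_right_inj' (inv_ne_zero hy.ne'), ← hscale, Real.rpow_neg hy.le]
  field_simp

theorem measurePreserving_reflect (A B : ℝ) :
    MeasurePreserving (fun r ↦ A + B - r) (volume.restrict (Ioo A B))
      (volume.restrict (Ioo A B)) := by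
  simpa using (volume.measurePreserving_sub_left (A + B)).restrict_preimage
    (measurableSet_Ioo (a := A) (b := B))

theorem integral_slope_jacobiWeight_reflect (t : ℝ) :
    ∫ r in Ioo A B, slope (jacobiWeight A B α) t r =
      -∫ r in Ioo A B, slope (jacobiWeight A B (-α)) (A + B - t) r := by
  rw [← (measurePreserving_reflect A B).integral_comp
    (MeasurableEquiv.subLeft (A + B)).measurableEmbedding (slope (jacobiWeight A B (-α)) _),
    ← MeasureTheory.integral_neg]
  simp only [slope_jacobiWeight_neg_reflect, neg_neg]

theorem integrableOn_slope_jacobiWeight_reflect (t : ℝ) :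
    IntegrableOn (slope (jacobiWeight A B α) t) (Ioo A B) ↔
      IntegrableOn (slope (jacobiWeight A B (-α)) (A + B - t)) (Ioo A B) := by
  have hcomp : slope (jacobiWeight A B (-α)) (A + B - t) ∘ (fun r ↦ A + B - r) =
      -slope (jacobiWeight A B α) t :=
    funext (slope_jacobiWeight_neg_reflect t)
  rw [IntegrableOn, IntegrableOn, ← integrable_neg_iff, ← hcomp,
    (measurePreserving_reflect A B).integrable_comp_emb
      (MeasurableEquiv.subLeft (A + B)).measurableEmbedding]

theorem integrableOn_slope_jacobiWeight (hα0 : α ≠ 0) (hα1 : |α| < 1) (ht : t ∈ Ioo A B) :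
    IntegrableOn (slope (jacobiWeight A B α) t) (Ioo A B) := by
  have hpos {a u : ℝ} (ha : a ∈ Ioo (0 : ℝ) 1) (hu : u ∈ Ioo A B) :
      IntegrableOn (slope (jacobiWeight A B a) u) (Ioo A B) := by
    rw [← halfLineMap_sub_div_sub hu]
    exact integrableOn_slope_jacobiWeight_halfLineMap (hu.1.trans hu.2) ha
      (div_pos (sub_pos.2 hu.1) (sub_pos.2 hu.2))
  obtain ⟨hlo, hhi⟩ := abs_lt.1 hα1
  rcases hα0.lt_or_gt with hneg | hgt
  · rw [integrableOn_slope_jacobiWeight_reflect]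
    exact hpos ⟨neg_pos.2 hneg, by linarith⟩ (add_sub_mem_Ioo ht)
  · exact hpos ⟨hgt, hhi⟩ ht

theorem integral_slope_jacobiWeight (hα0 : α ≠ 0) (hα1 : |α| < 1) (ht : t ∈ Ioo A B) :
    ∫ r in Ioo A B, slope (jacobiWeight A B α) t r =
      jacobiWeight A B α t * (Real.pi * Real.cot (Real.pi * α) + Real.log ((t - A) / (B - t))) -
        Real.pi / Real.sin (Real.pi * α) := by
  have hpos {a u : ℝ} (ha : a ∈ Ioo (0 : ℝ) 1) (hu : u ∈ Ioo A B) :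
      ∫ r in Ioo A B, slope (jacobiWeight A B a) u r =
        jacobiWeight A B a u * (Real.pi * Real.cot (Real.pi * a) + Real.log ((u - A) / (B - u))) -
          Real.pi / Real.sin (Real.pi * a) := by
    have h := integral_slope_jacobiWeight_halfLineMap (hu.1.trans hu.2) ha
      (div_pos (sub_pos.2 hu.1) (sub_pos.2 hu.2))
    rwa [halfLineMap_sub_div_sub hu, ← jacobiWeight_neg_eq_rpow, neg_neg] at h
  obtain ⟨hlo, hhi⟩ := abs_lt.1 hα1
  rcases hα0.lt_or_gt with hneg | hgt
  · have hlog : Real.log ((A + B - t - A) / (B - (A + B - t))) =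
        -Real.log ((t - A) / (B - t)) := by
      rw [← Real.log_inv, inv_div]
      ring_nf
    rw [integral_slope_jacobiWeight_reflect, hpos ⟨neg_pos.2 hneg, by linarith⟩
      (add_sub_mem_Ioo ht), jacobiWeight_neg_reflect, hlog, mul_neg,
      Real.cot_eq_cos_div_sin, Real.cot_eq_cos_div_sin, Real.sin_neg, Real.cos_neg]
    ring
  · exact hpos ⟨hgt, hhi⟩ ht

theorem hasPV_jacobiWeight (hα0 : α ≠ 0) (hα1 : |α| < 1) (hs : s ∈ Ioo A B) :
    HasPV A B (jacobiWeight A B α) s (jacobiWeight A B α s * (Real.pi * Real.cot (Real.pi * α)) -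
      Real.pi / Real.sin (Real.pi * α)) := by
  have h := HasPV.mul hs (by simp) (hasPV_one hs)
    (by simpa only [mul_one] using integrableOn_slope_jacobiWeight hα0 hα1 hs)
  simp only [mul_one, integral_slope_jacobiWeight hα0 hα1 hs] at h
  convert h using 1
  rw [← inv_div (s - A), Real.log_inv]
  ring

end JacobiWeight

section SlopeIntegral

variable {A B e : ℝ} {h : ℝ → ℝ}

theorem abs_div_sq_add_le_inv (he : 0 < e) (x : ℝ) : |x / (x ^ 2 + e)| ≤ |x⁻¹| := by
  rcases eq_or_ne x 0 with rfl | hx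
  · simp
  · have : 0 < x ^ 2 := by positivity
    rw [abs_div, abs_inv, abs_of_pos (by positivity : 0 < x ^ 2 + e), div_le_iff₀ (by positivity),
      ← sq_abs x]
    have := abs_pos.2 hx
    field_simp
    linarith

theorem abs_div_sq_add_le (he : 0 < e) (x : ℝ) : |x / (x ^ 2 + e)| ≤ 1 + 1 / e := by
  have hden : 0 < x ^ 2 + e := by positivity
  rw [abs_div, abs_of_pos hden, div_le_iff₀ hden]
  have hexpand : (1 + 1 / e) * (x ^ 2 + e) = 1 + |x| ^ 2 + e + |x| ^ 2 / e := by
    rw [sq_abs]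
    field_simp
    ring
  have := sq_nonneg (|x| - 1)
  have : 0 ≤ |x| ^ 2 / e := by positivity
  nlinarith

theorem integral_div_sq_add (he : 0 < e) (hAB : A ≤ B) (r : ℝ) :
    ∫ t in Ioo A B, (r - t) / ((r - t) ^ 2 + e) =
      Real.log (((r - A) ^ 2 + e) / ((B - r) ^ 2 + e)) / 2 := by
  have hderiv (t : ℝ) : HasDerivAt (fun t ↦ -Real.log ((r - t) ^ 2 + e) / 2)
      ((r - t) / ((r - t) ^ 2 + e)) t := by
    have hsq : HasDerivAt (fun t ↦ (r - t) ^ 2 + e) (2 * (r - t) * -1) t := by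
      simpa using (((hasDerivAt_id t).const_sub r).pow 2).add_const e
    refine ((hsq.log (by positivity)).neg.div_const 2).congr_deriv ?_
    field_simp
  have hcont : Continuous fun t ↦ (r - t) / ((r - t) ^ 2 + e) :=
    Continuous.div (by fun_prop) (by fun_prop) fun t ↦ by positivity
  rw [← integral_Ioc_eq_integral_Ioo, ← intervalIntegral.integral_of_le hAB,
    integral_eq_sub_of_hasDerivAt (fun t _ ↦ hderiv t) (hcont.intervalIntegrable A B),
    Real.log_div (by positivity) (by positivity), ← neg_sub r B, neg_sq]
  ring

theorem log_sq_add_sub_log_sq_add_le {a b : ℝ} (ha : 0 < a) (hb : 0 < b) (he : 0 < e) :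
    Real.log (a ^ 2 + e) - Real.log (b ^ 2 + e) ≤ 2 * |Real.log a - Real.log b| := by
  rcases le_total a b with hab | hab
  · have := Real.log_le_log (by positivity) (by gcongr : a ^ 2 + e ≤ b ^ 2 + e)
    have := abs_nonneg (Real.log a - Real.log b)
    linarith
  · have hratio : (a ^ 2 + e) / (b ^ 2 + e) ≤ (a / b) ^ 2 := by
      rw [div_pow, div_le_div_iff₀ (by positivity) (by positivity)]
      have : e * b ^ 2 ≤ e * a ^ 2 := by gcongr
      linarith
    have hlog := Real.log_le_log (by positivity) hratio
    rw [Real.log_div (by positivity) (by positivity), Real.log_pow,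
      Real.log_div ha.ne' hb.ne'] at hlog
    exact hlog.trans (by push_cast; gcongr; exact le_abs_self _)

theorem abs_log_sq_add_div_sq_add_le {a b : ℝ} (ha : 0 < a) (hb : 0 < b) (he : 0 < e) :
    |Real.log ((a ^ 2 + e) / (b ^ 2 + e))| ≤ 2 * |Real.log (a / b)| := by
  rw [Real.log_div (by positivity) (by positivity), Real.log_div ha.ne' hb.ne', abs_le', neg_sub]
  refine ⟨log_sq_add_sub_log_sq_add_le ha hb he, ?_⟩
  rw [abs_sub_comm]
  exact log_sq_add_sub_log_sq_add_le hb ha he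

theorem integral_sub_mul_of_odd {X : Type*} [MeasurableSpace X] {μ : Measure X} [SFinite μ]
    {f : X → ℝ} {k : X → X → ℝ} (hodd : ∀ x y, k x y = -k y x)
    (hint : Integrable (fun p : X × X ↦ f p.2 * k p.1 p.2) (μ.prod μ)) :
    ∫ p, (f p.2 - f p.1) * k p.1 p.2 ∂μ.prod μ = 2 * ∫ y, f y * ∫ x, k x y ∂μ ∂μ := by
  have hswap (p : X × X) : f p.1 * k p.1 p.2 = -(f p.swap.2 * k p.swap.1 p.swap.2) := by
    rw [Prod.snd_swap, Prod.fst_swap, hodd p.2, mul_neg, neg_neg]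
  have hint' : Integrable (fun p : X × X ↦ f p.1 * k p.1 p.2) (μ.prod μ) := by
    simp only [hswap]
    exact hint.swap.neg
  simp only [sub_mul]
  rw [MeasureTheory.integral_sub hint hint']
  simp only [hswap]
  rw [MeasureTheory.integral_neg, integral_prod_swap (fun p : X × X ↦ f p.2 * k p.1 p.2),
    integral_prod_symm _ hint]
  simp only [MeasureTheory.integral_const_mul]
  ring

theorem integral_sub_mul_div_sq_add (he : 0 < e) (hAB : A ≤ B) (hh : IntegrableOn h (Ioo A B)) :
    ∫ p, (h p.2 - h p.1) * ((p.2 - p.1) / ((p.2 - p.1) ^ 2 + e))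
        ∂(volume.restrict (Ioo A B)).prod (volume.restrict (Ioo A B)) =
      ∫ x in Ioo A B, h x * Real.log (((x - A) ^ 2 + e) / ((B - x) ^ 2 + e)) := by
  have hint : Integrable (fun p : ℝ × ℝ ↦ h p.2 * ((p.2 - p.1) / ((p.2 - p.1) ^ 2 + e)))
      ((volume.restrict (Ioo A B)).prod (volume.restrict (Ioo A B))) :=
    (hh.comp_snd _).mul_bdd (by fun_prop : Measurable _).aestronglyMeasurable
      (.of_forall fun p ↦ abs_div_sq_add_le he (p.2 - p.1))
  rw [integral_sub_mul_of_odd (k := fun t r ↦ (r - t) / ((r - t) ^ 2 + e)) _ hint,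
    ← MeasureTheory.integral_const_mul]
  · simp only [integral_div_sq_add he hAB]
    congr! 2
    ring
  · intro t r
    rw [← neg_sub r t, neg_sq, neg_div, neg_neg]

theorem tendsto_integral_sub_mul_div_sq_add
    (hslope : Integrable (fun p : ℝ × ℝ ↦ slope h p.1 p.2)
      ((volume.restrict (Ioo A B)).prod (volume.restrict (Ioo A B))))
    (hh : AEStronglyMeasurable h (volume.restrict (Ioo A B))) :
    Tendsto (fun e ↦ ∫ p, (h p.2 - h p.1) * ((p.2 - p.1) / ((p.2 - p.1) ^ 2 + e))
        ∂(volume.restrict (Ioo A B)).prod (volume.restrict (Ioo A B))) (𝓝[>] 0)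
      (𝓝 (∫ p, slope h p.1 p.2 ∂(volume.restrict (Ioo A B)).prod (volume.restrict (Ioo A B)))) := by
  have hslope_eq (p : ℝ × ℝ) : slope h p.1 p.2 = (h p.2 - h p.1) * (p.2 - p.1)⁻¹ := by
    rw [slope_def_field, div_eq_mul_inv]
  refine tendsto_integral_filter_of_dominated_convergence _ ?_ ?_ hslope.norm ?_
  · exact .of_forall fun e ↦ (hh.comp_snd.sub hh.comp_fst).mul
      (by fun_prop : Measurable _).aestronglyMeasurable
  · filter_upwards [self_mem_nhdsWithin] with e he
    refine .of_forall fun p ↦ ?_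
    rw [hslope_eq, norm_mul, norm_mul]
    exact mul_le_mul_of_nonneg_left (abs_div_sq_add_le_inv he _) (norm_nonneg _)
  · refine .of_forall fun p ↦ Tendsto.mono_left ?_ nhdsWithin_le_nhds
    rcases eq_or_ne p.2 p.1 with heq | hne
    · simp [heq]
    · have hsub : p.2 - p.1 ≠ 0 := sub_ne_zero.2 hne
      have hcont : ContinuousAt
          (fun e ↦ (h p.2 - h p.1) * ((p.2 - p.1) / ((p.2 - p.1) ^ 2 + e))) 0 := by
        fun_prop (disch := simpa using hsub)
      convert hcont.tendsto using 2
      rw [hslope_eq, add_zero, sq, div_mul_cancel_left₀ hsub]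

theorem tendsto_integral_mul_log_sq_add (hh : AEStronglyMeasurable h (volume.restrict (Ioo A B)))
    (hlog : IntegrableOn (fun x ↦ h x * Real.log ((x - A) / (B - x))) (Ioo A B)) :
    Tendsto (fun e ↦ ∫ x in Ioo A B, h x * Real.log (((x - A) ^ 2 + e) / ((B - x) ^ 2 + e)))
      (𝓝[>] 0) (𝓝 (2 * ∫ x in Ioo A B, h x * Real.log ((x - A) / (B - x)))) := by
  rw [← MeasureTheory.integral_const_mul]
  refine tendsto_integral_filter_of_dominated_convergence _ ?_ ?_ (hlog.norm.const_mul 2) ?_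
  · exact .of_forall fun e ↦ hh.mul (by fun_prop : Measurable _).aestronglyMeasurable
  · filter_upwards [self_mem_nhdsWithin] with e he
    refine ae_restrict_of_forall_mem measurableSet_Ioo fun x hx ↦ ?_
    rw [norm_mul, norm_mul, mul_left_comm]
    exact mul_le_mul_of_nonneg_left
      (abs_log_sq_add_div_sq_add_le (sub_pos.2 hx.1) (sub_pos.2 hx.2) he) (norm_nonneg _)
  · refine ae_restrict_of_forall_mem measurableSet_Ioo fun x hx ↦ ?_
    refine Tendsto.mono_left ?_ nhdsWithin_le_nhds
    have hA : x - A ≠ 0 := (sub_pos.2 hx.1).ne'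
    have hB : B - x ≠ 0 := (sub_pos.2 hx.2).ne'
    have hcont : ContinuousAt
        (fun e ↦ h x * Real.log (((x - A) ^ 2 + e) / ((B - x) ^ 2 + e))) 0 := by
      fun_prop (disch := simp [hA, hB])
    convert hcont.tendsto using 2
    rw [add_zero, add_zero, ← div_pow, Real.log_pow]
    push_cast
    ring

theorem integral_slope_prod (hAB : A ≤ B) (hh : IntegrableOn h (Ioo A B))
    (hlog : IntegrableOn (fun x ↦ h x * Real.log ((x - A) / (B - x))) (Ioo A B))
    (hslope : Integrable (fun p : ℝ × ℝ ↦ slope h p.1 p.2)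
      ((volume.restrict (Ioo A B)).prod (volume.restrict (Ioo A B)))) :
    ∫ p, slope h p.1 p.2 ∂(volume.restrict (Ioo A B)).prod (volume.restrict (Ioo A B)) =
      2 * ∫ x in Ioo A B, h x * Real.log ((x - A) / (B - x)) := by
  refine tendsto_nhds_unique
    (tendsto_integral_sub_mul_div_sq_add hslope hh.aestronglyMeasurable)
    ((tendsto_integral_mul_log_sq_add hh.aestronglyMeasurable hlog).congr' ?_)
  filter_upwards [self_mem_nhdsWithin] with e he
  exact (integral_sub_mul_div_sq_add he hAB hh).symm

end SlopeIntegral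

section WeightedSlopeIntegral

variable {A B α r t : ℝ} {h : ℝ → ℝ}

theorem integrable_mul_kernel {X Y : Type*} [MeasurableSpace X] [MeasurableSpace Y]
    {μ : Measure X} {ν : Measure Y} [SFinite μ] [SFinite ν] {f : X → ℝ} {k : X → Y → ℝ}
    (hf : AEStronglyMeasurable f μ)
    (hk : AEStronglyMeasurable (fun p : X × Y ↦ k p.1 p.2) (μ.prod ν))
    (hint : ∀ᵐ x ∂μ, Integrable (k x) ν)
    (hsign : ∀ᵐ x ∂μ, 0 ≤ᵐ[ν] k x ∨ k x ≤ᵐ[ν] 0)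
    (hmul : Integrable (fun x ↦ f x * ∫ y, k x y ∂ν) μ) :
    Integrable (fun p : X × Y ↦ f p.1 * k p.1 p.2) (μ.prod ν) := by
  refine (integrable_prod_iff (hf.comp_fst.mul hk)).2
    ⟨hint.mono fun x hx ↦ hx.const_mul (f x), hmul.norm.congr ?_⟩
  filter_upwards [hsign] with x hx
  simp only [Pi.mul_apply, norm_mul, MeasureTheory.integral_const_mul]
  congr 1
  rcases hx with hpos | hneg
  · rw [Real.norm_of_nonneg (integral_nonneg_of_ae hpos)]
    exact integral_congr_ae (hpos.mono fun y hy ↦ (Real.norm_of_nonneg hy).symm)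
  · rw [Real.norm_of_nonpos (integral_nonpos_of_ae hneg), ← MeasureTheory.integral_neg]
    exact integral_congr_ae (hneg.mono fun y hy ↦ (Real.norm_of_nonpos hy).symm)

theorem abs_log_le_add_inv {x : ℝ} (hx : 0 < x) : |Real.log x| ≤ x + x⁻¹ := by
  have := Real.log_le_self hx.le
  have := Real.log_le_self (inv_pos.2 hx).le
  rw [Real.log_inv] at this
  have := inv_pos.2 hx
  exact abs_le.2 ⟨by linarith, by linarith⟩

theorem log_eq_neg_log_jacobiWeight_div (hα0 : α ≠ 0) (hr : r ∈ Ioo A B) :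
    Real.log ((r - A) / (B - r)) = -α⁻¹ * Real.log (jacobiWeight A B α r) := by
  rw [jacobiWeight, Real.log_rpow (div_pos (sub_pos.2 hr.2) (sub_pos.2 hr.1)), ← inv_div (r - A),
    Real.log_inv]
  field_simp

theorem measurable_jacobiWeight (A B α : ℝ) : Measurable (jacobiWeight A B α) := by
  unfold jacobiWeight
  fun_prop

theorem integrableOn_mul_log (hα0 : α ≠ 0) (hh : IntegrableOn h (Ioo A B))
    (hpos : IntegrableOn (fun r ↦ h r * jacobiWeight A B α r) (Ioo A B))
    (hneg : IntegrableOn (fun r ↦ h r * jacobiWeight A B (-α) r) (Ioo A B)) :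
    IntegrableOn (fun r ↦ h r * Real.log ((r - A) / (B - r))) (Ioo A B) := by
  refine Integrable.mono' ((hpos.norm.add hneg.norm).const_mul |α⁻¹|)
    (hh.aestronglyMeasurable.mul (by fun_prop : Measurable _).aestronglyMeasurable)
    (ae_restrict_of_forall_mem measurableSet_Ioo fun r hr ↦ ?_)
  have hlog := abs_log_le_add_inv (jacobiWeight_pos (α := α) hr)
  rw [← jacobiWeight_neg hr] at hlog
  rw [log_eq_neg_log_jacobiWeight_div hα0 hr, mul_left_comm, norm_mul, norm_neg, Pi.add_apply,
    norm_mul, norm_mul, norm_mul, ← mul_add, Real.norm_of_nonneg (jacobiWeight_pos hr).le,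
    Real.norm_of_nonneg (jacobiWeight_pos hr).le]
  exact mul_le_mul_of_nonneg_left (mul_le_mul_of_nonneg_left hlog (norm_nonneg _)) (abs_nonneg _)

theorem antitoneOn_jacobiWeight (hα : 0 ≤ α) : AntitoneOn (jacobiWeight A B α) (Ioo A B) := by
  intro r hr t ht hrt
  refine Real.rpow_le_rpow (div_pos (sub_pos.2 ht.2) (sub_pos.2 ht.1)).le ?_ hα
  exact div_le_div₀ (sub_pos.2 hr.2).le (by linarith) (sub_pos.2 hr.1) (by linarith)

theorem monotoneOn_jacobiWeight (hα : α ≤ 0) : MonotoneOn (jacobiWeight A B α) (Ioo A B) := by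
  intro r hr t ht hrt
  rw [← neg_neg α, jacobiWeight_neg hr, jacobiWeight_neg ht]
  exact inv_anti₀ (jacobiWeight_pos ht)
    (antitoneOn_jacobiWeight (neg_nonneg.2 hα) hr ht hrt)

/-- The kernel `(w(r) - w(t)) / (w(t) (r - t))` for the weight `w = jacobiWeight A B α`; it has
constant sign, and its integrals over one variable are elementary. -/
noncomputable def weightKernel (A B α t r : ℝ) : ℝ :=
  jacobiWeight A B (-α) t * slope (jacobiWeight A B α) t r

theorem weightKernel_neg_swap (ht : t ∈ Ioo A B) (hr : r ∈ Ioo A B) :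
    weightKernel A B (-α) r t = -weightKernel A B α t r := by
  have := jacobiWeight_pos (α := α) ht
  have := jacobiWeight_pos (α := α) hr
  rw [weightKernel, weightKernel, neg_neg, slope_comm, slope_def_field, slope_def_field,
    jacobiWeight_neg ht, jacobiWeight_neg hr]
  field_simp
  ring

theorem jacobiWeight_neg_mul_mul_slope (h : ℝ → ℝ) (ht : t ∈ Ioo A B) :
    jacobiWeight A B (-α) t * (jacobiWeight A B α r * slope h t r) =
      slope h t r + weightKernel A B α t r * (h r - h t) := by
  have := jacobiWeight_pos (α := α) ht
  rw [weightKernel, slope_def_field, slope_def_field, jacobiWeight_neg ht]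
  field_simp
  ring

theorem weightKernel_constant_sign (α : ℝ) (ht : t ∈ Ioo A B) :
    0 ≤ᵐ[volume.restrict (Ioo A B)] weightKernel A B α t ∨
      weightKernel A B α t ≤ᵐ[volume.restrict (Ioo A B)] 0 := by
  have hw := (jacobiWeight_pos (α := -α) ht).le
  rcases le_total 0 α with hα | hα
  · exact Or.inr (ae_restrict_of_forall_mem measurableSet_Ioo fun r hr ↦
      mul_nonpos_of_nonneg_of_nonpos hw ((antitoneOn_jacobiWeight hα).slope_nonpos ht hr))
  · exact Or.inl (ae_restrict_of_forall_mem measurableSet_Ioo fun r hr ↦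
      mul_nonneg hw ((monotoneOn_jacobiWeight hα).slope_nonneg ht hr))

theorem measurable_weightKernel (A B α : ℝ) :
    Measurable fun p : ℝ × ℝ ↦ weightKernel A B α p.1 p.2 := by
  have hpos := measurable_jacobiWeight A B α
  have hneg := measurable_jacobiWeight A B (-α)
  simp only [weightKernel, slope_def_field]
  fun_prop

theorem integral_weightKernel (hα0 : α ≠ 0) (hα1 : |α| < 1) (ht : t ∈ Ioo A B) :
    ∫ r in Ioo A B, weightKernel A B α t r =
      Real.pi * Real.cot (Real.pi * α) + Real.log ((t - A) / (B - t)) -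
        Real.pi / Real.sin (Real.pi * α) * jacobiWeight A B (-α) t := by
  simp only [weightKernel]
  rw [MeasureTheory.integral_const_mul, integral_slope_jacobiWeight hα0 hα1 ht, mul_sub,
    ← mul_assoc, jacobiWeight_neg_mul ht]
  ring

theorem ae_mem_Ioo_prod (A B : ℝ) :
    ∀ᵐ p ∂(volume.restrict (Ioo A B)).prod (volume.restrict (Ioo A B)),
      p.1 ∈ Ioo A B ∧ p.2 ∈ Ioo A B := by
  rw [Measure.prod_restrict]
  exact ae_restrict_mem (measurableSet_Ioo.prod measurableSet_Ioo)

theorem jacobiWeight_neg_mul_mul_slope_ae_eq (A B α : ℝ) (h : ℝ → ℝ) :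
    (fun p : ℝ × ℝ ↦ jacobiWeight A B (-α) p.1 * (jacobiWeight A B α p.2 * slope h p.1 p.2))
      =ᵐ[(volume.restrict (Ioo A B)).prod (volume.restrict (Ioo A B))]
    fun p ↦ slope h p.1 p.2 - h p.1 * weightKernel A B α p.1 p.2 -
      h p.swap.1 * weightKernel A B (-α) p.swap.1 p.swap.2 := by
  filter_upwards [ae_mem_Ioo_prod A B] with p ⟨ht, hr⟩
  rw [jacobiWeight_neg_mul_mul_slope h ht, Prod.fst_swap, Prod.snd_swap,
    weightKernel_neg_swap ht hr]
  ring

variable (hα0 : α ≠ 0) (hα1 : |α| < 1) (hh : IntegrableOn h (Ioo A B))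
  (hpos : IntegrableOn (fun r ↦ h r * jacobiWeight A B α r) (Ioo A B))
  (hneg : IntegrableOn (fun r ↦ h r * jacobiWeight A B (-α) r) (Ioo A B))

include hα0 hα1 hh hpos hneg

theorem integrable_mul_weightKernel :
    Integrable (fun p : ℝ × ℝ ↦ h p.1 * weightKernel A B α p.1 p.2)
      ((volume.restrict (Ioo A B)).prod (volume.restrict (Ioo A B))) := by
  have hlog := integrableOn_mul_log hα0 hh hpos hneg
  refine integrable_mul_kernel hh.aestronglyMeasurable
    (measurable_weightKernel A B α).aestronglyMeasurable ?_ ?_ ?_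
  · exact ae_restrict_of_forall_mem measurableSet_Ioo fun t ht ↦
      (integrableOn_slope_jacobiWeight hα0 hα1 ht).const_mul _
  · exact ae_restrict_of_forall_mem measurableSet_Ioo fun t ht ↦ weightKernel_constant_sign α ht
  · refine IntegrableOn.congr_fun (((hh.mul_const (Real.pi * Real.cot (Real.pi * α))).add hlog).sub
      (hneg.const_mul (Real.pi / Real.sin (Real.pi * α)))) (fun t ht ↦ ?_) measurableSet_Ioo
    simp only [integral_weightKernel hα0 hα1 ht, Pi.add_apply, Pi.sub_apply]
    ring

theorem integral_mul_weightKernel :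
    ∫ p, h p.1 * weightKernel A B α p.1 p.2
        ∂(volume.restrict (Ioo A B)).prod (volume.restrict (Ioo A B)) =
      Real.pi * Real.cot (Real.pi * α) * (∫ t in Ioo A B, h t) +
        (∫ t in Ioo A B, h t * Real.log ((t - A) / (B - t))) -
        Real.pi / Real.sin (Real.pi * α) * ∫ t in Ioo A B, h t * jacobiWeight A B (-α) t := by
  have hlog := integrableOn_mul_log hα0 hh hpos hneg
  have hadd : IntegrableOn (fun t ↦ Real.pi * Real.cot (Real.pi * α) * h t +
      h t * Real.log ((t - A) / (B - t))) (Ioo A B) := (hh.const_mul _).add hlog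
  rw [integral_prod _ (integrable_mul_weightKernel hα0 hα1 hh hpos hneg),
    ← MeasureTheory.integral_const_mul, ← MeasureTheory.integral_const_mul,
    ← MeasureTheory.integral_add (hh.const_mul _) hlog,
    ← MeasureTheory.integral_sub hadd (hneg.const_mul _)]
  refine setIntegral_congr_fun measurableSet_Ioo fun t ht ↦ ?_
  simp only [MeasureTheory.integral_const_mul, integral_weightKernel hα0 hα1 ht]
  ring

variable (hslope : Integrable (fun p : ℝ × ℝ ↦ slope h p.1 p.2)
  ((volume.restrict (Ioo A B)).prod (volume.restrict (Ioo A B))))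

include hslope

theorem integrable_jacobiWeight_mul_slope_prod :
    Integrable (fun p : ℝ × ℝ ↦
      jacobiWeight A B (-α) p.1 * (jacobiWeight A B α p.2 * slope h p.1 p.2))
      ((volume.restrict (Ioo A B)).prod (volume.restrict (Ioo A B))) := by
  have hk := integrable_mul_weightKernel hα0 hα1 hh hpos hneg
  have hk' := integrable_mul_weightKernel (α := -α) (neg_ne_zero.2 hα0) (by rwa [abs_neg]) hh hneg
    (by rwa [neg_neg])
  exact ((hslope.sub hk).sub hk'.swap).congr
    (jacobiWeight_neg_mul_mul_slope_ae_eq A B α h).symm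

theorem integral_jacobiWeight_mul_slope_prod (hAB : A ≤ B) :
    ∫ p, jacobiWeight A B (-α) p.1 * (jacobiWeight A B α p.2 * slope h p.1 p.2)
        ∂(volume.restrict (Ioo A B)).prod (volume.restrict (Ioo A B)) =
      Real.pi / Real.sin (Real.pi * α) * ((∫ r in Ioo A B, h r * jacobiWeight A B (-α) r) -
        ∫ r in Ioo A B, h r * jacobiWeight A B α r) := by
  have hα0' : -α ≠ 0 := neg_ne_zero.2 hα0
  have hα1' : |-α| < 1 := by rwa [abs_neg]
  have hpos' : IntegrableOn (fun r ↦ h r * jacobiWeight A B (- -α) r) (Ioo A B) := by rwa [neg_neg]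
  have hk := integrable_mul_weightKernel hα0 hα1 hh hpos hneg
  have hk' := integrable_mul_weightKernel hα0' hα1' hh hneg hpos'
  have hswap : Integrable (fun p : ℝ × ℝ ↦ h p.swap.1 * weightKernel A B (-α) p.swap.1 p.swap.2)
      ((volume.restrict (Ioo A B)).prod (volume.restrict (Ioo A B))) := hk'.swap
  have hsub : Integrable (fun p : ℝ × ℝ ↦ slope h p.1 p.2 - h p.1 * weightKernel A B α p.1 p.2)
      ((volume.restrict (Ioo A B)).prod (volume.restrict (Ioo A B))) := hslope.sub hk
  rw [MeasureTheory.integral_congr_ae (jacobiWeight_neg_mul_mul_slope_ae_eq A B α h),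
    MeasureTheory.integral_sub hsub hswap, MeasureTheory.integral_sub hslope hk,
    integral_prod_swap (fun p : ℝ × ℝ ↦ h p.1 * weightKernel A B (-α) p.1 p.2),
    integral_slope_prod hAB hh (integrableOn_mul_log hα0 hh hpos hneg) hslope,
    integral_mul_weightKernel hα0 hα1 hh hpos hneg,
    integral_mul_weightKernel hα0' hα1' hh hneg hpos', neg_neg, mul_neg,
    Real.cot_eq_cos_div_sin, Real.cot_eq_cos_div_sin, Real.sin_neg, Real.cos_neg]
  ring

end WeightedSlopeIntegral

section HolderSlope

variable {A B a b p q s t r α : ℝ} {S : Set ℝ} {C γ : ℝ≥0} {φ : ℝ → ℝ}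

theorem integrableOn_abs_sub_rpow_neg (hp : p < 1) (a A B : ℝ) :
    IntegrableOn (fun r ↦ |r - a| ^ (-p)) (Ioo A B) := by
  have hloc : LocallyIntegrable (fun x : ℝ ↦ |x| ^ (-p)) := by
    refine locallyIntegrable_of_norm_le_rpow (C := 1) (α := p) (by simp) (by simpa using hp)
      (Filter.Eventually.of_forall fun x ↦ ?_)
      (by fun_prop : Measurable fun x : ℝ ↦ |x| ^ (-p)).aestronglyMeasurable
    rw [one_mul, Real.norm_eq_abs, Real.norm_eq_abs, Real.abs_rpow_of_nonneg (abs_nonneg x),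
      abs_abs]
  have hint : IntegrableOn (fun x : ℝ ↦ |x| ^ (-p)) (Ioo (A - a) (B - a)) :=
    (hloc.integrableOn_isCompact isCompact_Icc).mono_set Ioo_subset_Icc_self
  rw [← (measurePreserving_sub_right volume a).integrableOn_comp_preimage
    (measurableEmbedding_subRight a)] at hint
  simpa only [Function.comp_def, preimage_sub_const_Ioo, sub_add_cancel] using hint

theorem rpow_neg_mul_rpow_neg_le {x y d : ℝ} (hp : 0 ≤ p) (hq : 0 ≤ q) (hd : 0 < d) (hx : 0 ≤ x)
    (hy : 0 ≤ y) (hdxy : 2 * d ≤ x + y) :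
    x ^ (-p) * y ^ (-q) ≤ d ^ (-q) * x ^ (-p) + d ^ (-p) * y ^ (-q) := by
  have hxp := Real.rpow_nonneg hx (-p)
  have hyq := Real.rpow_nonneg hy (-q)
  have hdp := Real.rpow_nonneg hd.le (-p)
  have hdq := Real.rpow_nonneg hd.le (-q)
  rcases le_or_gt d x with h | h
  · have := mul_le_mul_of_nonneg_right
      (Real.rpow_le_rpow_of_nonpos hd h (neg_nonpos.2 hp)) hyq
    nlinarith
  · have := mul_le_mul_of_nonneg_left
      (Real.rpow_le_rpow_of_nonpos hd (by linarith : d ≤ y) (neg_nonpos.2 hq)) hxp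
    nlinarith

theorem integrableOn_abs_sub_rpow_neg_mul (hp : p ∈ Ico 0 1) (hq : q ∈ Ico 0 1) (hab : a ≠ b)
    (A B : ℝ) : IntegrableOn (fun r ↦ |r - a| ^ (-p) * |r - b| ^ (-q)) (Ioo A B) := by
  have hd : 0 < |a - b| / 2 := half_pos (abs_pos.2 (sub_ne_zero.2 hab))
  refine integrableOn_of_abs_le measurableSet_Ioo (by fun_prop)
    (((integrableOn_abs_sub_rpow_neg hp.2 a A B).const_mul ((|a - b| / 2) ^ (-q))).add
      ((integrableOn_abs_sub_rpow_neg hq.2 b A B).const_mul ((|a - b| / 2) ^ (-p)))) fun r _ ↦ ?_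
  rw [abs_of_nonneg (by positivity)]
  refine rpow_neg_mul_rpow_neg_le hp.1 hq.1 hd (abs_nonneg _) (abs_nonneg _) ?_
  rw [mul_div_cancel₀ _ two_ne_zero, abs_sub_comm r a]
  exact abs_sub_le a r b

theorem jacobiWeight_le (hr : r ∈ Ioo A B) :
    jacobiWeight A B α r ≤ (B - A) ^ |α| * (|r - A| ^ (-|α|) + |r - B| ^ (-|α|)) := by
  have hA : 0 < r - A := sub_pos.2 hr.1
  have hB : 0 < B - r := sub_pos.2 hr.2
  have hAB : 0 < B - A := by linarith
  rw [abs_of_pos hA, abs_sub_comm r, abs_of_pos hB, mul_add, Real.rpow_neg hA.le,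
    Real.rpow_neg hB.le, ← div_eq_mul_inv, ← div_eq_mul_inv, ← Real.div_rpow hAB.le hA.le,
    ← Real.div_rpow hAB.le hB.le]
  rcases le_total 0 α with hα | hα
  · rw [abs_of_nonneg hα]
    refine le_add_of_le_of_nonneg (Real.rpow_le_rpow (by positivity) ?_ hα) (by positivity)
    gcongr
    linarith
  · rw [abs_of_nonpos hα, ← neg_neg α, jacobiWeight_neg_eq_rpow, neg_neg]
    refine le_add_of_nonneg_of_le (by positivity)
      (Real.rpow_le_rpow (by positivity) ?_ (neg_nonneg.2 hα))
    gcongr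
    linarith

theorem integrableOn_abs_sub_rpow_neg_mul_jacobiWeight (hs : s ∈ Ioo A B) (hp : p ∈ Ico 0 1)
    (hα : |α| < 1) :
    IntegrableOn (fun r ↦ |r - s| ^ (-p) * jacobiWeight A B α r) (Ioo A B) := by
  have hα' : |α| ∈ Ico 0 1 := ⟨abs_nonneg α, hα⟩
  refine integrableOn_of_abs_le measurableSet_Ioo
    (((by fun_prop : Measurable fun r : ℝ ↦ |r - s| ^ (-p)).mul
      (measurable_jacobiWeight A B α)).aestronglyMeasurable)
    (((integrableOn_abs_sub_rpow_neg_mul hp hα' hs.1.ne' A B).add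
      (integrableOn_abs_sub_rpow_neg_mul hp hα' hs.2.ne A B)).const_mul ((B - A) ^ |α|))
    fun r hr ↦ ?_
  rw [abs_of_nonneg (mul_nonneg (by positivity) (jacobiWeight_pos hr).le), Pi.add_apply, ← mul_add,
    mul_left_comm]
  exact mul_le_mul_of_nonneg_left (jacobiWeight_le hr) (by positivity)

theorem integrableOn_jacobiWeight (hα : |α| < 1) :
    IntegrableOn (jacobiWeight A B α) (Ioo A B) := by
  rcases le_or_gt B A with hAB | hAB
  · simp [Ioo_eq_empty_of_le hAB]
  · have hmid : (A + B) / 2 ∈ Ioo A B := ⟨by linarith, by linarith⟩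
    simpa only [neg_zero, Real.rpow_zero, one_mul] using
      integrableOn_abs_sub_rpow_neg_mul_jacobiWeight hmid ⟨le_rfl, one_pos⟩ hα

theorem holderOnWith_of_abs_sub_le
    (h : ∀ x ∈ S, ∀ y ∈ S, |φ x - φ y| ≤ C * |x - y| ^ (γ : ℝ)) : HolderOnWith C γ φ S := by
  intro x hx y hy
  rw [edist_nndist, edist_nndist, ← ENNReal.coe_rpow_of_nonneg _ γ.coe_nonneg]
  exact_mod_cast h x hx y hy

theorem abs_slope_le_of_holderOnWith (hφ : HolderOnWith C γ φ S) (ht : t ∈ S) (hr : r ∈ S) :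
    |slope φ t r| ≤ C * |r - t| ^ (γ - 1 : ℝ) := by
  rcases eq_or_ne r t with rfl | hrt
  · rw [slope_same, abs_zero]
    positivity
  · have hpos : 0 < |r - t| := abs_pos.2 (sub_ne_zero.2 hrt)
    have hdist := hφ.dist_le hr ht
    rw [Real.dist_eq, Real.dist_eq] at hdist
    rwa [slope_def_field, abs_div, Real.rpow_sub_one hpos.ne', ← mul_div_assoc,
      div_le_div_iff_of_pos_right hpos]

theorem aestronglyMeasurable_slope_of_continuousOn (hφ : ContinuousOn φ (Ioo A B)) (s : ℝ) :
    AEStronglyMeasurable (slope φ s) (volume.restrict (Ioo A B)) := by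
  simp only [slope_fun_def_field]
  exact ((hφ.aemeasurable measurableSet_Ioo).sub_const _).div
    (by fun_prop) |>.aestronglyMeasurable

theorem integrableOn_slope_mul_jacobiWeight (hφ : HolderOnWith C γ φ (Ioo A B))
    (hγ0 : 0 < γ) (hγ1 : γ ≤ 1) (hs : s ∈ Ioo A B) (hα : |α| < 1) :
    IntegrableOn (fun r ↦ slope φ s r * jacobiWeight A B α r) (Ioo A B) := by
  have hp : 1 - (γ : ℝ) ∈ Ico 0 1 := ⟨sub_nonneg.2 (mod_cast hγ1), sub_lt_self 1 (mod_cast hγ0)⟩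
  refine integrableOn_of_abs_le measurableSet_Ioo
    ((aestronglyMeasurable_slope_of_continuousOn (hφ.continuousOn hγ0) s).mul
      (measurable_jacobiWeight A B α).aestronglyMeasurable)
    ((integrableOn_abs_sub_rpow_neg_mul_jacobiWeight hs hp hα).const_mul C) fun r hr ↦ ?_
  rw [abs_mul, abs_of_pos (jacobiWeight_pos hr), ← mul_assoc, neg_sub]
  exact mul_le_mul_of_nonneg_right (abs_slope_le_of_holderOnWith hφ hs hr) (jacobiWeight_pos hr).le

theorem integrableOn_slope_of_holderOnWith (hφ : HolderOnWith C γ φ (Ioo A B)) (hγ0 : 0 < γ)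
    (hγ1 : γ ≤ 1) (hs : s ∈ Ioo A B) : IntegrableOn (slope φ s) (Ioo A B) := by
  simpa only [jacobiWeight, Real.rpow_zero, mul_one] using
    integrableOn_slope_mul_jacobiWeight hφ hγ0 hγ1 hs (α := 0) (by simp)

theorem slope_slope_mul_sub (φ : ℝ → ℝ) (hts : t ≠ s) (hrs : r ≠ s) (hrt : r ≠ t) :
    slope (slope φ s) t r * (t - s) = slope φ t r - slope φ s r := by
  have hts' := sub_ne_zero.2 hts
  have hrs' := sub_ne_zero.2 hrs
  have hrt' := sub_ne_zero.2 hrt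
  simp only [slope_def_field]
  field_simp
  ring

theorem rpow_sub_one_le_mul {x y z : ℝ} {γ : ℝ} (hx : 0 < x) (hz : 0 < z) (hγ0 : 0 ≤ γ)
    (hγ2 : γ ≤ 2) (hxy : x ≤ y) (hzy : z ≤ y) :
    z ^ (γ - 1) ≤ y * (z ^ (γ / 2 - 1) * x ^ (γ / 2 - 1)) := by
  have hy : 0 ≤ y := hx.le.trans hxy
  have hmean : z ^ (γ / 2) * x ^ (1 - γ / 2) ≤ y := calc
    z ^ (γ / 2) * x ^ (1 - γ / 2) ≤ y ^ (γ / 2) * y ^ (1 - γ / 2) := by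
      gcongr
      linarith
    _ = y := by
      rw [← Real.rpow_add_of_nonneg hy (by linarith) (by linarith), add_sub_cancel, Real.rpow_one]
  calc z ^ (γ - 1)
      = z ^ (γ / 2) * x ^ (1 - γ / 2) * (z ^ (γ / 2 - 1) * x ^ (γ / 2 - 1)) := by
        rw [mul_mul_mul_comm, ← Real.rpow_add hz, ← Real.rpow_add hx]
        ring_nf
        rw [Real.rpow_zero, mul_one]
    _ ≤ y * (z ^ (γ / 2 - 1) * x ^ (γ / 2 - 1)) := by gcongr

theorem abs_slope_slope_le_of_holderOnWith_of_le (hφ : HolderOnWith C γ φ S) (hγ1 : γ ≤ 1)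
    (hs : s ∈ S) (ht : t ∈ S) (hr : r ∈ S) (hrs : r ≠ s) (hle : |r - s| ≤ |t - s|) :
    |slope (slope φ s) t r| ≤
      4 * C * (|r - t| ^ (γ / 2 - 1 : ℝ) * |r - s| ^ (γ / 2 - 1 : ℝ)) := by
  rcases eq_or_ne r t with rfl | hrt
  · rw [slope_same, abs_zero]
    positivity
  have hx : 0 < |r - s| := abs_pos.2 (sub_ne_zero.2 hrs)
  have hz : 0 < |r - t| := abs_pos.2 (sub_ne_zero.2 hrt)
  have hy : 0 < |t - s| := hx.trans_le hle
  have hzy : |r - t| ≤ 2 * |t - s| := by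
    linarith [abs_sub_le r s t, abs_sub_comm s t]
  have hxy : |r - s| ≤ 2 * |t - s| := by linarith
  have hγ2 : (γ : ℝ) ≤ 2 := le_trans (mod_cast hγ1) one_le_two
  have hz_le := rpow_sub_one_le_mul hx hz γ.coe_nonneg hγ2 hxy hzy
  have hx_le := rpow_sub_one_le_mul hz hx γ.coe_nonneg hγ2 hzy hxy
  rw [mul_comm (|r - s| ^ _)] at hx_le
  refine le_of_mul_le_mul_right ?_ hy
  calc |slope (slope φ s) t r| * |t - s|
      = |slope φ t r - slope φ s r| := by
        rw [← abs_mul, slope_slope_mul_sub φ (sub_ne_zero.1 (abs_pos.1 hy)) hrs hrt]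
    _ ≤ |slope φ t r| + |slope φ s r| := abs_sub _ _
    _ ≤ C * |r - t| ^ (γ - 1 : ℝ) + C * |r - s| ^ (γ - 1 : ℝ) :=
        add_le_add (abs_slope_le_of_holderOnWith hφ ht hr) (abs_slope_le_of_holderOnWith hφ hs hr)
    _ ≤ C * (2 * |t - s| * (|r - t| ^ (γ / 2 - 1 : ℝ) * |r - s| ^ (γ / 2 - 1 : ℝ))) +
        C * (2 * |t - s| * (|r - t| ^ (γ / 2 - 1 : ℝ) * |r - s| ^ (γ / 2 - 1 : ℝ))) := by gcongr
    _ = 4 * C * (|r - t| ^ (γ / 2 - 1 : ℝ) * |r - s| ^ (γ / 2 - 1 : ℝ)) * |t - s| := by ring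

theorem abs_slope_slope_le_of_holderOnWith (hφ : HolderOnWith C γ φ S) (hγ1 : γ ≤ 1)
    (hs : s ∈ S) (ht : t ∈ S) (hr : r ∈ S) (hts : t ≠ s) (hrs : r ≠ s) :
    |slope (slope φ s) t r| ≤
      4 * C * (|r - t| ^ (γ / 2 - 1 : ℝ) * |r - s| ^ (γ / 2 - 1 : ℝ) +
        |r - t| ^ (γ / 2 - 1 : ℝ) * |t - s| ^ (γ / 2 - 1 : ℝ)) := by
  rw [mul_add]
  rcases le_total |r - s| |t - s| with hle | hle
  · exact le_add_of_le_of_nonneg (abs_slope_slope_le_of_holderOnWith_of_le hφ hγ1 hs ht hr hrs hle)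
      (by positivity)
  · rw [slope_comm, abs_sub_comm r t]
    exact le_add_of_nonneg_of_le (by positivity)
      (abs_slope_slope_le_of_holderOnWith_of_le hφ hγ1 hs hr ht hts hle)

theorem integrable_abs_sub_rpow_neg_prod (hp : p < 1) (s A B : ℝ) :
    Integrable (fun x : ℝ × ℝ ↦ |x.2 - x.1| ^ (-p) * |x.2 - s| ^ (-p))
      ((volume.restrict (Ioo A B)).prod (volume.restrict (Ioo A B))) := by
  have hf := (integrableOn_abs_sub_rpow_neg hp s A B).integrable_indicator measurableSet_Ioo
  have hg := (integrableOn_abs_sub_rpow_neg hp 0 (A - B) (B - A)).integrable_indicator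
    measurableSet_Ioo
  rw [Measure.prod_restrict]
  refine (hf.convolution_integrand (ContinuousLinearMap.mul ℝ ℝ) hg).integrableOn.congr_fun
    (fun x ⟨h1, h2⟩ ↦ ?_) (measurableSet_Ioo.prod measurableSet_Ioo)
  have h12 : x.1 - x.2 ∈ Ioo (A - B) (B - A) := ⟨by linarith [h1.1, h2.2], by linarith [h1.2, h2.1]⟩
  simp only [indicator_of_mem h2, indicator_of_mem h12, ContinuousLinearMap.mul_apply', sub_zero]
  rw [mul_comm, abs_sub_comm]

theorem integrable_slope_slope_prod (hφ : HolderOnWith C γ φ (Ioo A B)) (hγ0 : 0 < γ)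
    (hγ1 : γ ≤ 1) (hs : s ∈ Ioo A B) :
    Integrable (fun x : ℝ × ℝ ↦ slope (slope φ s) x.1 x.2)
      ((volume.restrict (Ioo A B)).prod (volume.restrict (Ioo A B))) := by
  have hp : 1 - (γ / 2 : ℝ) < 1 := sub_lt_self 1 (by positivity)
  have hbound := integrable_abs_sub_rpow_neg_prod hp s A B
  have hmeas := aestronglyMeasurable_slope_of_continuousOn (hφ.continuousOn hγ0) s
  have hne : ∀ᵐ t ∂volume.restrict (Ioo A B), t ≠ s := ae_restrict_of_ae (Measure.ae_ne volume s)
  refine ((hbound.add hbound.swap).const_mul (4 * C)).mono' ?_ ?_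
  · simp only [slope_def_field (slope φ s)]
    exact ((hmeas.comp_snd.sub hmeas.comp_fst).aemeasurable.div
      (measurable_snd.sub measurable_fst).aemeasurable).aestronglyMeasurable
  · filter_upwards [ae_mem_Ioo_prod A B, Measure.quasiMeasurePreserving_fst.ae hne,
      Measure.quasiMeasurePreserving_snd.ae hne] with x ⟨h1, h2⟩ hne1 hne2
    simp only [Pi.add_apply, Function.comp_apply, Prod.fst_swap, Prod.snd_swap, neg_sub]
    rw [abs_sub_comm x.1 x.2]
    exact abs_slope_slope_le_of_holderOnWith hφ hγ1 hs h1 h2 hne1 hne2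

end HolderSlope

section Inversion

variable {A B s t α : ℝ} {C γ : ℝ≥0} {φ ψ : ℝ → ℝ}

/-- The absolutely convergent part of `PV ∫_A^B φ(r) w(r)/(r−t) dr`, `w` being the Jacobi weight:
what is left after subtracting `φ(t) PV ∫_A^B w(r)/(r−t) dr`. -/
noncomputable def regularPart (A B α : ℝ) (φ : ℝ → ℝ) (t : ℝ) : ℝ :=
  ∫ r in Ioo A B, slope φ t r * jacobiWeight A B α r

/-- The factor of the candidate solution of `ψ + tan(πα) H[ψ] = φ` that multiplies
`cos(πα) ((s−A)/(B−s))^α`. -/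
noncomputable def solutionFactor (A B α : ℝ) (φ : ℝ → ℝ) (t : ℝ) : ℝ :=
  φ t - Real.sin (Real.pi * α) / Real.pi * regularPart A B α φ t

theorem slope_solutionFactor (s t : ℝ) :
    slope (solutionFactor A B α φ) s t =
      slope φ s t - Real.sin (Real.pi * α) / Real.pi * slope (regularPart A B α φ) s t := by
  simp only [slope_def_field, solutionFactor]
  ring

theorem sin_pi_mul_ne_zero_of_abs_lt_one (hα0 : α ≠ 0) (hα1 : |α| < 1) :
    Real.sin (Real.pi * α) ≠ 0 := by
  have hlt := abs_lt.1 hα1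
  rw [Ne, Real.sin_eq_zero_iff_of_lt_of_lt (by nlinarith [Real.pi_pos])
    (by nlinarith [Real.pi_pos])]
  exact mul_ne_zero Real.pi_ne_zero hα0

variable (hφ : HolderOnWith C γ φ (Ioo A B)) (hγ0 : 0 < γ) (hγ1 : γ ≤ 1) (hα1 : |α| < 1)
  (hs : s ∈ Ioo A B)

include hφ hγ0 hγ1 hα1 hs

theorem slope_regularPart (ht : t ∈ Ioo A B) (hts : t ≠ s) :
    slope (regularPart A B α φ) s t =
      ∫ r in Ioo A B, jacobiWeight A B α r * slope (slope φ s) t r := by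
  rw [slope_def_field, div_eq_iff (sub_ne_zero.2 hts), ← MeasureTheory.integral_mul_const,
    regularPart, regularPart, ← MeasureTheory.integral_sub
      (integrableOn_slope_mul_jacobiWeight hφ hγ0 hγ1 ht hα1)
      (integrableOn_slope_mul_jacobiWeight hφ hγ0 hγ1 hs hα1)]
  refine MeasureTheory.integral_congr_ae (ae_restrict_of_ae ?_)
  filter_upwards [Measure.ae_ne volume s, Measure.ae_ne volume t] with r hrs hrt
  rw [mul_assoc, slope_slope_mul_sub φ hts hrs hrt]
  ring

theorem slope_regularPart_mul_ae_eq :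
    (fun t ↦ slope (regularPart A B α φ) s t * jacobiWeight A B (-α) t)
      =ᵐ[volume.restrict (Ioo A B)] fun t ↦ ∫ r in Ioo A B,
        jacobiWeight A B (-α) t * (jacobiWeight A B α r * slope (slope φ s) t r) := by
  filter_upwards [ae_restrict_mem measurableSet_Ioo, ae_restrict_of_ae (Measure.ae_ne volume s)]
    with t ht hts
  rw [slope_regularPart hφ hγ0 hγ1 hα1 hs ht hts, MeasureTheory.integral_const_mul, mul_comm]

theorem integrableOn_slope_regularPart_mul (hα0 : α ≠ 0) :
    IntegrableOn (fun t ↦ slope (regularPart A B α φ) s t * jacobiWeight A B (-α) t)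
      (Ioo A B) :=
  (integrable_jacobiWeight_mul_slope_prod hα0 hα1
    (integrableOn_slope_of_holderOnWith hφ hγ0 hγ1 hs)
    (integrableOn_slope_mul_jacobiWeight hφ hγ0 hγ1 hs hα1)
    (integrableOn_slope_mul_jacobiWeight hφ hγ0 hγ1 hs (by rwa [abs_neg]))
    (integrable_slope_slope_prod hφ hγ0 hγ1 hs)).integral_prod_left.congr
    (slope_regularPart_mul_ae_eq hφ hγ0 hγ1 hα1 hs).symm

theorem integral_slope_regularPart_mul (hα0 : α ≠ 0) :
    ∫ t in Ioo A B, slope (regularPart A B α φ) s t * jacobiWeight A B (-α) t =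
      Real.pi / Real.sin (Real.pi * α) *
        (regularPart A B (-α) φ s - regularPart A B α φ s) := by
  have hh := integrableOn_slope_of_holderOnWith hφ hγ0 hγ1 hs
  have hpos := integrableOn_slope_mul_jacobiWeight hφ hγ0 hγ1 hs hα1
  have hneg := integrableOn_slope_mul_jacobiWeight (α := -α) hφ hγ0 hγ1 hs (by rwa [abs_neg])
  have hslope := integrable_slope_slope_prod hφ hγ0 hγ1 hs
  rw [MeasureTheory.integral_congr_ae (slope_regularPart_mul_ae_eq hφ hγ0 hγ1 hα1 hs),
    ← integral_prod _ (integrable_jacobiWeight_mul_slope_prod hα0 hα1 hh hpos hneg hslope),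
    integral_jacobiWeight_mul_slope_prod hα0 hα1 hh hpos hneg hslope (hs.1.trans hs.2).le,
    regularPart, regularPart]

theorem hasPV_jacobiWeight_mul (hα0 : α ≠ 0) :
    HasPV A B (fun r ↦ ((B - r) / (r - A)) ^ α * φ r) s
      (φ s * (jacobiWeight A B α s * (Real.pi * Real.cot (Real.pi * α)) -
        Real.pi / Real.sin (Real.pi * α)) + regularPart A B α φ s) :=
  (HasPV.mul hs (integrableOn_jacobiWeight hα1) (hasPV_jacobiWeight hα0 hα1 hs)
    (integrableOn_slope_mul_jacobiWeight hφ hγ0 hγ1 hs hα1)).congr hs fun _ _ ↦ mul_comm _ _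

theorem integrableOn_slope_solutionFactor_mul (hα0 : α ≠ 0) :
    IntegrableOn (fun t ↦ slope (solutionFactor A B α φ) s t * jacobiWeight A B (-α) t)
      (Ioo A B) := by
  simp only [slope_solutionFactor, sub_mul, mul_assoc]
  exact (integrableOn_slope_mul_jacobiWeight hφ hγ0 hγ1 hs (by rwa [abs_neg])).sub
    ((integrableOn_slope_regularPart_mul hφ hγ0 hγ1 hα1 hs hα0).const_mul _)

theorem integral_slope_solutionFactor_mul (hα0 : α ≠ 0) :
    ∫ t in Ioo A B, slope (solutionFactor A B α φ) s t * jacobiWeight A B (-α) t =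
      regularPart A B α φ s := by
  have hS := sin_pi_mul_ne_zero_of_abs_lt_one hα0 hα1
  simp only [slope_solutionFactor, sub_mul, mul_assoc]
  rw [MeasureTheory.integral_sub
      (integrableOn_slope_mul_jacobiWeight hφ hγ0 hγ1 hs (by rwa [abs_neg]))
      ((integrableOn_slope_regularPart_mul hφ hγ0 hγ1 hα1 hs hα0).const_mul _),
    MeasureTheory.integral_const_mul, integral_slope_regularPart_mul hφ hγ0 hγ1 hα1 hs hα0,
    ← regularPart, ← mul_assoc, div_mul_div_cancel₀ Real.pi_ne_zero, div_self hS, one_mul,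
    sub_sub_cancel]

theorem hasPV_solutionFactor_mul (hα0 : α ≠ 0) :
    HasPV A B (fun t ↦ solutionFactor A B α φ t * jacobiWeight A B (-α) t) s
      (Real.pi / Real.sin (Real.pi * α) * φ s - Real.pi * Real.cot (Real.pi * α) *
        (solutionFactor A B α φ s * jacobiWeight A B (-α) s)) := by
  have hS := sin_pi_mul_ne_zero_of_abs_lt_one hα0 hα1
  have hα1' : |-α| < 1 := by rwa [abs_neg]
  convert HasPV.mul hs (integrableOn_jacobiWeight hα1')
    (hasPV_jacobiWeight (neg_ne_zero.2 hα0) hα1' hs)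
    (integrableOn_slope_solutionFactor_mul hφ hγ0 hγ1 hα1 hs hα0) using 1
  rw [integral_slope_solutionFactor_mul hφ hγ0 hγ1 hα1 hs hα0, mul_neg, Real.cot_eq_cos_div_sin,
    Real.cot_eq_cos_div_sin, Real.sin_neg, Real.cos_neg, solutionFactor]
  field_simp
  ring

theorem inversionFormula_eq_solutionFactor_mul (hα0 : α ≠ 0) :
    Real.cos (Real.pi * α) ^ 2 * φ s -
        Real.sin (Real.pi * α) * Real.cos (Real.pi * α) * ((s - A) / (B - s)) ^ α *
          Hfin A B (fun r => ((B - r) / (r - A)) ^ α * φ r) s =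
      Real.cos (Real.pi * α) * (solutionFactor A B α φ s * jacobiWeight A B (-α) s) := by
  have hS := sin_pi_mul_ne_zero_of_abs_lt_one hα0 hα1
  have hw := jacobiWeight_pos (α := α) hs
  rw [(hasPV_jacobiWeight_mul hφ hγ0 hγ1 hα1 hs hα0).Hfin_eq, ← jacobiWeight_neg_eq_rpow,
    jacobiWeight_neg hs, Real.cot_eq_cos_div_sin, solutionFactor]
  field_simp
  ring

omit hs in
theorem inversion_formula_constant_coefficient_general (hα0 : α ≠ 0)
    (hcos : Real.cos (Real.pi * α) ≠ 0)
    (hψ : ∀ s ∈ Ioo A B, ψ s = Real.cos (Real.pi * α) ^ 2 * φ s -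
        Real.sin (Real.pi * α) * Real.cos (Real.pi * α) * ((s - A) / (B - s)) ^ α *
          Hfin A B (fun r => ((B - r) / (r - A)) ^ α * φ r) s) :
    ∀ s ∈ Ioo A B,
      (∃ L : ℝ, Tendsto (pvApprox A B (fun r => ((B - r) / (r - A)) ^ α * φ r) s)
        (𝓝[>] 0) (𝓝 L)) ∧
      (∃ L : ℝ, Tendsto (pvApprox A B ψ s) (𝓝[>] 0) (𝓝 L)) ∧
      ψ s + Real.tan (Real.pi * α) * Hfin A B ψ s = φ s := by
  intro s hs
  have hS := sin_pi_mul_ne_zero_of_abs_lt_one hα0 hα1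
  have hψ' : EqOn (fun t ↦ Real.cos (Real.pi * α) *
      (solutionFactor A B α φ t * jacobiWeight A B (-α) t)) ψ (Ioo A B) := fun t ht ↦
    ((hψ t ht).trans (inversionFormula_eq_solutionFactor_mul hφ hγ0 hγ1 hα1 ht hα0)).symm
  have hpv := ((hasPV_solutionFactor_mul hφ hγ0 hγ1 hα1 hs hα0).const_mul _).congr hs hψ'
  refine ⟨⟨_, hasPV_jacobiWeight_mul hφ hγ0 hγ1 hα1 hs hα0⟩, ⟨_, hpv⟩, ?_⟩
  rw [hpv.Hfin_eq, ← hψ' hs, Real.tan_eq_sin_div_cos, Real.cot_eq_cos_div_sin]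
  field_simp
  ring

end Inversion

/-- Inversion of `L_α[ψ] = ψ + tan(πα) H[ψ]` with constant coefficient `α ∈ (0,1/2)`:
`ψ = cos²(πα)φ − sin(πα)cos(πα)((s−A)/(B−s))^α H[((B−·)/(·−A))^α φ]` satisfies
`L_α[ψ] = φ` on `(A,B)`, all principal values involved existing. -/
theorem inversion_formula_constant_coefficient (A B : ℝ) (hAB : A < B)
    (α : ℝ) (hα : α ∈ Set.Ioo (0 : ℝ) (1/2)) (φ : ℝ → ℝ)
    (γ : ℝ) (hγ : γ ∈ Set.Ioc (0 : ℝ) 1) (C : ℝ) (hC : 0 ≤ C)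
    (hφHolder : ∀ r ∈ Set.Icc A B, ∀ r' ∈ Set.Icc A B, |φ r - φ r'| ≤ C * |r - r'| ^ γ)
    (ψ : ℝ → ℝ)
    (hψ : ∀ s : ℝ, ψ s = Real.cos (Real.pi * α) ^ 2 * φ s -
        Real.sin (Real.pi * α) * Real.cos (Real.pi * α) * ((s - A) / (B - s)) ^ α *
          Hfin A B (fun r => ((B - r) / (r - A)) ^ α * φ r) s) :
    ∀ s ∈ Set.Ioo A B,
      (∃ L : ℝ, Tendsto (pvApprox A B (fun r => ((B - r) / (r - A)) ^ α * φ r) s)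
        (𝓝[>] 0) (𝓝 L)) ∧
      (∃ L : ℝ, Tendsto (pvApprox A B ψ s) (𝓝[>] 0) (𝓝 L)) ∧
      ψ s + Real.tan (Real.pi * α) * Hfin A B ψ s = φ s := by
  have hcos : 0 < Real.cos (Real.pi * α) := Real.cos_pos_of_mem_Ioo
    ⟨by nlinarith [Real.pi_pos, hα.1], by nlinarith [Real.pi_pos, hα.2]⟩
  lift C to ℝ≥0 using hC
  lift γ to ℝ≥0 using hγ.1.le
  have hφ : HolderOnWith C γ φ (Ioo A B) :=
    (holderOnWith_of_abs_sub_le hφHolder).mono Ioo_subset_Icc_self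
  exact inversion_formula_constant_coefficient_general hφ (mod_cast hγ.1) (mod_cast hγ.2)
    (by rw [abs_of_pos hα.1]; linarith [hα.2]) hα.1.ne' hcos.ne' fun s _ ↦ hψ s
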